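/- arXiv:2405.07296 — 2 statements merged into one kernel-verified Lean document; each statement's English description precedes it below -/
import Mathlib

section
/- Let m ∈ ℕ with m ≥ 1, let h : ℕ → ℕ be a polynomial with coefficients in ℕ and zero constant term, let a₁,…,a_m ∈ ℕ, let p be a minimal idempotent ultrafilter on ℕ, and let A ∈ h̃(a₁·p + ⋯ + a_m·p), where h̃ denotes the pushforward of ultrafilters along h. Then for every T ∈ 𝒫_f(ℙ) there exist functions α : 𝒫_f(ℕ^ℕ) → ℕ and H : 𝒫_f(ℕ^ℕ) → 𝒫_f(ℕ) such that (1) whenever F ⊊ G in 𝒫_f(ℕ^ℕ), max H(F) < min H(G), and (2) whenever G₁ ⊊ G₂ ⊊ ⋯ is an infinite strictly increasing chain in 𝒫_f(ℕ^ℕ), f_i ∈ G_i for each i ∈ ℕ, P₁,…,P_m ∈ T, and β₁ < ⋯ < β_m are in 𝒫_f(ℕ), then h(Σ_{l=1}^m a_l·(Σ_{i∈β_l}α(G_i) + P_l(Σ_{i∈β_l}Σ_{t∈H(G_i)}f_i(t)))) ∈ A. -/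
/-!
A member `B` of a minimal idempotent `p` is a J-set for polynomials. To see this, push `p` forward
to `βℤ`, where it still generates a minimal left ideal, so that the members of the ultrafilters in
that ideal are syndetic relative to one another. Recurrence of `B` under finitely many polynomial
maps along finite sums `x_H` follows by colour focusing: if it failed, one could build more focus
points than there are translates in the syndeticity of `B`. A focusing step only involves the maps
`q (v + ·) - q v - ψ`. For a polynomial map `q` of degree `d + 1` their classes modulo degree `d`
are those of `q - ψ`, and choosing `ψ` to be one of the maps makes its class drop in degree, which
allows an induction on the degree and the number of classes.

The moves `(α F, H F)` are then chosen by recursion on `F` along `⊂`. As `F` has finitely many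
subsets, only finitely many partial sums can have arisen before `F`, and they are kept in the star
sets of the admissible next values, so that each can be continued by `p`-many summands. Since
`P (x + y) = P x + R y` with a polynomial `R` vanishing at `0`, a single application of the
polynomial J-set property to the intersection of these sets continues all partial sums at once.
-/

namespace MultiCST

/-- The sum `p + q` of ultrafilters on ℕ: `A ∈ p + q` iff `{x : {y : x+y ∈ A} ∈ q} ∈ p`. -/
def uAdd (p q : Ultrafilter ℕ) : Ultrafilter ℕ :=
  p.bind fun x => q.map fun y => x + y

/-- `A ⊆ ℕ` is a J-set. -/
def IsJSet (A : Set ℕ) : Prop :=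
  ∀ F : Finset (ℕ → ℕ), F.Nonempty →
    ∃ (a : ℕ) (β : Finset ℕ), β.Nonempty ∧ ∀ f ∈ F, a + ∑ t ∈ β, f t ∈ A

/-- `p ∈ 𝒥`: every member of `p` is a J-set. -/
def MemJ (p : Ultrafilter ℕ) : Prop := ∀ A : Set ℕ, A ∈ p → IsJSet A

/-- `p` is an idempotent ultrafilter. -/
def IdempotentUF (p : Ultrafilter ℕ) : Prop := uAdd p p = p

/-- `p` is a minimal idempotent ultrafilter. -/
def IsMinimalIdempotent (p : Ultrafilter ℕ) : Prop :=
  IdempotentUF p ∧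
    ∀ q : Ultrafilter ℕ, IdempotentUF q → uAdd q p = q → uAdd p q = q → q = p

/-- Tensor product `⊗_{i=1}^m p_i` of ultrafilters on ℕ, as an ultrafilter on `Fin m → ℕ`. -/
def tensor : ∀ m : ℕ, (Fin m → Ultrafilter ℕ) → Ultrafilter (Fin m → ℕ)
  | 0, _ => pure fun i => i.elim0
  | m + 1, p =>
      (p 0).bind fun x => (tensor m fun i => p i.succ).map fun v => Fin.cons x v

/-- `f : ℕ → ℕ` is (given by) a polynomial with coefficients in ℕ and zero constant term. -/
def IsPolyZeroConst (f : ℕ → ℕ) : Prop :=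
  ∃ P : Polynomial ℕ, P.coeff 0 = 0 ∧ ∀ x, f x = P.eval x

/-- The linear combination `a₁·p₁ + a₂·p₂ + ⋯ + a_m·p_m` of ultrafilters on ℕ. -/
def linComb : ∀ m : ℕ, (Fin m → ℕ) → (Fin m → Ultrafilter ℕ) → Ultrafilter ℕ
  | 0, _, _ => pure 0
  | m + 1, a, p =>
      uAdd ((p 0).map fun x => a 0 * x)
        (linComb m (fun i => a i.succ) fun i => p i.succ)

section PolyMap

open Polynomial

variable {M M' G : Type*} [AddZeroClass M] [AddZeroClass M'] [AddCommGroup G]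

/-- The difference operator `q ↦ q (v + ·) - q v`, normalised so that its values vanish at `0`. -/
def diff (v : M) : (M → G) →+ (M → G) where
  toFun q u := q (v + u) - q v
  map_zero' := by ext; simp
  map_add' q r := by ext; simp only [Pi.add_apply]; abel

lemma diff_apply (v : M) (q : M → G) (u : M) : diff v q u = q (v + u) - q v := rfl

variable (M G) in
/-- The group of polynomial maps `M → G` of degree at most `d` that vanish at `0`. The recursion
is on the polarisations `u ↦ q (v + u) - q v - q u`, whose degree is one less than that of `q`. -/
def polyMap : ℕ → AddSubgroup (M → G)
  | 0 => ⊥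
  | d + 1 => ⨅ v : M, (polyMap d).comap (diff v - AddMonoidHom.id (M → G))

lemma mem_polyMap_succ {d : ℕ} {q : M → G} :
    q ∈ polyMap M G (d + 1) ↔ ∀ v, diff v q - q ∈ polyMap M G d := by
  simp [polyMap, AddSubgroup.mem_iInf]

lemma polyMap_mono : Monotone (polyMap M G) := by
  refine monotone_nat_of_le_succ fun d => ?_
  induction d with
  | zero => exact bot_le
  | succ d ih => exact fun q hq => mem_polyMap_succ.2 fun v => ih (mem_polyMap_succ.1 hq v)

lemma apply_zero_of_mem_polyMap {d : ℕ} {q : M → G} (hq : q ∈ polyMap M G d) : q 0 = 0 := by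
  induction d generalizing q with
  | zero => exact congrFun (AddSubgroup.mem_bot.1 hq) 0
  | succ d ih => simpa [diff_apply] using ih (mem_polyMap_succ.1 hq 0)

lemma diff_sub_mem_polyMap {d : ℕ} {q r : M → G} (hq : q ∈ polyMap M G (d + 1))
    (hr : r - q ∈ polyMap M G d) (v : M) : diff v r - q ∈ polyMap M G d := by
  have hr' : r ∈ polyMap M G (d + 1) := by
    simpa using add_mem (polyMap_mono d.le_succ hr) hq
  simpa using add_mem (mem_polyMap_succ.1 hr' v) hr

lemma comp_mem_polyMap (g : M' →+ M) {d : ℕ} {q : M → G} (hq : q ∈ polyMap M G d) :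
    q ∘ g ∈ polyMap M' G d := by
  induction d generalizing q with
  | zero => rw [AddSubgroup.mem_bot.1 hq]; exact zero_mem _
  | succ d ih =>
    refine mem_polyMap_succ.2 fun v => ?_
    convert ih (mem_polyMap_succ.1 hq (g v)) using 1
    ext u
    simp [diff_apply]

lemma natDegree_taylor_sub_self_le {R : Type*} [CommRing R] (P : R[X]) (v : R) :
    (taylor v P - P).natDegree ≤ P.natDegree - 1 := by
  refine natDegree_le_iff_coeff_eq_zero.2 fun n hn => ?_
  have hPn : P.natDegree ≤ n := by lia
  rcases hPn.eq_or_lt with rfl | hPn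
  · rw [coeff_sub, coeff_taylor_natDegree, coeff_natDegree, sub_self]
  · simp [coeff_eq_zero_of_natDegree_lt, hPn]

lemma eval_mem_polyMap {R : Type*} [CommRing R] {P : R[X]} (h0 : P.coeff 0 = 0) {d : ℕ}
    (hP : P.natDegree ≤ d) : (fun x => P.eval x) ∈ polyMap R R d := by
  induction d generalizing P with
  | zero =>
    rw [eq_C_of_natDegree_le_zero hP, h0]
    simp [polyMap, Pi.zero_def]
  | succ d ih =>
    refine mem_polyMap_succ.2 fun v => ?_
    have hdeg : (taylor v P - P - C (P.eval v)).natDegree ≤ d := by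
      rw [natDegree_sub_C]
      exact (natDegree_taylor_sub_self_le P v).trans (Nat.sub_le_of_le_add hP)
    convert ih (by simp [h0]) hdeg using 1
    ext u
    simp [diff_apply, taylor_eval, add_comm v u, sub_right_comm]

end PolyMap

section IPRecurrence

/-- A translation invariant family of large subsets of `G`, each of which is syndetic relative to
the family: finitely many translates of it meet every member of the family in a member. -/
structure IsSyndeticFamily {G : Type*} [Add G] (L : Set (Set G)) : Prop where
  shift : ∀ B ∈ L, ∀ g, {n | g + n ∈ B} ∈ L
  mono : ∀ B ∈ L, ∀ B', B ⊆ B' → B' ∈ L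
  cover : ∀ B ∈ L, ∃ C : Finset G, ∀ B' ∈ L, ∃ t ∈ C, {n | n ∈ B' ∧ t + n ∈ B} ∈ L

variable {M G : Type*} [AddCommMonoid M] [AddCommGroup G]

/-- The maps in `C` are recurrent along the finite sums of the sequence `x`: for finitely many of
them and every `B ∈ L`, there is a finite sum `x_H` such that the points `n ∈ B` with
`φ x_H + n ∈ B` for all the chosen `φ` form a member of `L`. -/
def IPRecurrent (L : Set (Set G)) (x : ℕ → M) (C : Set (M → G)) : Prop :=
  ∀ Φ : Finset (M → G), (Φ : Set (M → G)) ⊆ C → ∀ B ∈ L, ∀ N : ℕ,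
    ∃ H : Finset ℕ, H.Nonempty ∧ (∀ i ∈ H, N < i) ∧
      {n | n ∈ B ∧ ∀ φ ∈ Φ, φ (∑ i ∈ H, x i) + n ∈ B} ∈ L

/-- Colour focusing: the index set `K` brings all points of `U` into the translate `B - t`, along
every `φ ∈ Φ`. -/
def IsFocused (x : ℕ → M) (Φ : Finset (M → G)) (B U : Set G) (t : G) (K : Finset ℕ) : Prop :=
  ∀ n ∈ U, ∀ φ ∈ Φ, t + φ (∑ i ∈ K, x i) + n ∈ B

variable {L : Set (Set G)} {x : ℕ → M} {C C' : Set (M → G)} {Φ : Finset (M → G)} {B U V : Set G}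

lemma ipRecurrent_empty (hL : IsSyndeticFamily L) (x : ℕ → M) :
    IPRecurrent L x (∅ : Set (M → G)) := by
  refine fun Φ hΦ B hB N => ⟨{N + 1}, by simp, by simp, hL.mono B hB _ fun n hn => ⟨hn, ?_⟩⟩
  exact fun φ hφ => (hΦ hφ).elim

lemma IPRecurrent.union_zero (hL : IsSyndeticFamily L) (hC : IPRecurrent L x C) :
    IPRecurrent L x (C ∪ {0}) := by
  classical
  intro Φ hΦ B hB N
  obtain ⟨H, hH, hNH, hHL⟩ := hC (Φ.filter (· ∈ C)) (fun φ hφ => (Finset.mem_filter.1 hφ).2) B hB N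
  refine ⟨H, hH, hNH, hL.mono _ hHL _ fun n hn => ⟨hn.1, fun φ hφ => ?_⟩⟩
  rcases hΦ hφ with hφC | rfl
  · exact hn.2 φ (Finset.mem_filter.2 ⟨hφ, hφC⟩)
  · simpa using hn.1

lemma IsFocused.mono {t : G} {K : Finset ℕ} (hVU : V ⊆ U) (h : IsFocused x Φ B U t K) :
    IsFocused x Φ B V t K :=
  fun n hn => h n (hVU hn)

lemma IsFocused.union {t : G} {K H : Finset ℕ} {ψ : M → G} (h : IsFocused x Φ B U t K)
    (hKH : Disjoint K H)
    (hV : ∀ n ∈ V, ∀ φ ∈ Φ,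
      (diff (∑ i ∈ K, x i) φ - ψ) (∑ i ∈ H, x i) + (ψ (∑ i ∈ H, x i) + n) ∈ U) :
    IsFocused x Φ B V t (K ∪ H) := by
  intro n hn φ hφ
  convert h _ (hV n hn φ hφ) φ hφ using 1
  rw [Finset.sum_union hKH, Pi.sub_apply, diff_apply]
  abel

/-- All index sets are enlarged by the same `H`, which keeps the focus points. Translating `U` by
`ψ x_H` replaces the differenced maps by recentred ones, for which recurrence is known. -/
lemma IPRecurrent.exists_focused_union (hL : IsSyndeticFamily L) (hC' : IPRecurrent L x C')
    {ψ : M → G} (hC : ∀ φ ∈ Φ, ∀ v, diff v φ - ψ ∈ C') (hU : U ∈ L) {S : Finset G} {N N' : ℕ}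
    (hNN' : N ≤ N')
    (hS : ∀ t ∈ S, ∃ K : Finset ℕ, (∀ i ∈ K, N < i ∧ i ≤ N') ∧ IsFocused x Φ B U t K) :
    ∃ V ∈ L, ∃ N'' ≥ N', ∀ t ∈ S, ∃ K : Finset ℕ, K.Nonempty ∧ (∀ i ∈ K, N < i ∧ i ≤ N'') ∧
      IsFocused x Φ B V t K := by
  classical
  choose! K hKN hK using hS
  obtain ⟨H, hH, hN'H, hHL⟩ :=
    hC' ((Φ ×ˢ S).image fun a => diff (∑ i ∈ K a.2, x i) a.1 - ψ)
      (fun _ h => by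
        obtain ⟨a, ha, rfl⟩ := Finset.mem_image.1 h
        exact hC _ (Finset.mem_product.1 ha).1 _) U hU N'
  refine ⟨_, hL.shift _ hHL (ψ (∑ i ∈ H, x i)), N' ⊔ H.sup id, le_sup_left,
    fun t ht => ⟨K t ∪ H, hH.mono Finset.subset_union_right, fun i hi => ?_, ?_⟩⟩
  · rcases Finset.mem_union.1 hi with hiK | hiH
    · exact ⟨(hKN t ht i hiK).1, le_sup_of_le_left (hKN t ht i hiK).2⟩
    · exact ⟨hNN'.trans_lt (hN'H i hiH), le_sup_of_le_right (Finset.le_sup (f := id) hiH)⟩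
  · have hKH : Disjoint (K t) H := Finset.disjoint_left.2 fun i hiK hiH =>
      ((hKN t ht i hiK).2.trans_lt (hN'H i hiH)).false
    exact (hK t ht).union hKH fun n hn φ hφ =>
      hn.2 _ (Finset.mem_image.2 ⟨(φ, t), Finset.mem_product.2 ⟨hφ, ht⟩, rfl⟩)

lemma IsFocused.setOf_mem (hL : IsSyndeticFamily L) {t : G} {K : Finset ℕ} (hV : V ∈ L)
    (hVB : ∀ n ∈ V, t + n ∈ B) (h : IsFocused x Φ B V t K) :
    {n | n ∈ B ∧ ∀ φ ∈ Φ, φ (∑ i ∈ K, x i) + n ∈ B} ∈ L := by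
  refine hL.mono _ (hL.shift V hV (-t)) _ fun n hn => ⟨by simpa using hVB _ hn, fun φ hφ => ?_⟩
  convert h _ hn φ hφ using 1
  abel

lemma IPRecurrent.exists_focused_card (hL : IsSyndeticFamily L) (hC' : IPRecurrent L x C')
    {ψ : M → G} (hΦ0 : ∀ φ ∈ Φ, φ 0 = 0) (hC : ∀ φ ∈ Φ, ∀ v, diff v φ - ψ ∈ C') (hB : B ∈ L)
    {T : Finset G} (hT : ∀ B' ∈ L, ∃ t ∈ T, {n | n ∈ B' ∧ t + n ∈ B} ∈ L) {N : ℕ}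
    (hN : ¬ ∃ H : Finset ℕ, H.Nonempty ∧ (∀ i ∈ H, N < i) ∧
      {n | n ∈ B ∧ ∀ φ ∈ Φ, φ (∑ i ∈ H, x i) + n ∈ B} ∈ L) (k : ℕ) :
    ∃ S ⊆ T, S.card = k ∧ ∃ U ∈ L, ∃ N' ≥ N, ∀ t ∈ S, ∃ K : Finset ℕ,
      (∀ i ∈ K, N < i ∧ i ≤ N') ∧ IsFocused x Φ B U t K := by
  classical
  induction k with
  | zero => exact ⟨∅, by simp, rfl, B, hB, N, le_rfl, by simp⟩
  | succ k ih =>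
    obtain ⟨S, hST, rfl, U, hU, N', hNN', hS⟩ := ih
    obtain ⟨V, hV, N'', hN'', hSV⟩ := hC'.exists_focused_union hL hC hU hNN' hS
    obtain ⟨t, htT, htV⟩ := hT V hV
    have htS : t ∉ S := fun ht => by
      obtain ⟨K, hK, hNK, hKV⟩ := hSV t ht
      exact hN ⟨K, hK, fun i hi => (hNK i hi).1,
        (hKV.mono fun n hn => hn.1).setOf_mem hL htV fun n hn => hn.2⟩
    refine ⟨insert t S, Finset.insert_subset htT hST, Finset.card_insert_of_notMem htS, _, htV,
      N'', hNN'.trans hN'', fun s hs => ?_⟩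
    rcases Finset.mem_insert.1 hs with rfl | hs
    · exact ⟨∅, by simp, fun n hn φ hφ => by simpa [hΦ0 φ hφ] using hn.2⟩
    · obtain ⟨K, -, hNK, hKV⟩ := hSV s hs
      exact ⟨K, hNK, hKV.mono fun n hn => hn.1⟩

/-- If recurrence failed, ever more points of the finite set from `IsSyndeticFamily.cover` would
become focused. -/
lemma IPRecurrent.of_diff_sub (hL : IsSyndeticFamily L) (hC' : IPRecurrent L x C') (ψ : M → G)
    (hC0 : ∀ φ ∈ C, φ 0 = 0) (hC : ∀ φ ∈ C, ∀ v, diff v φ - ψ ∈ C') : IPRecurrent L x C := by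
  intro Φ hΦ B hB N
  by_contra hN
  obtain ⟨T, hT⟩ := hL.cover B hB
  obtain ⟨S, hST, hS, -⟩ := hC'.exists_focused_card hL (fun φ hφ => hC0 φ (hΦ hφ))
    (fun φ hφ => hC φ (hΦ hφ)) hB hT hN (T.card + 1)
  exact absurd (Finset.card_le_card hST) (by lia)

/-- Sets of maps, closed under differencing and under changing a map by a polynomial map of degree
at most `d`, to which all polynomial maps of degree at most `d` can be adjoined. -/
structure IsAdmissible (d : ℕ) (Q : Set (M → G)) : Prop where
  apply_zero : ∀ q ∈ Q, q 0 = 0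
  add_mem : ∀ q ∈ Q, ∀ r ∈ polyMap M G d, q + r ∈ Q
  diff_mem : ∀ q ∈ Q, ∀ v, diff v q ∈ Q

variable {d : ℕ} {Q Q' : Set (M → G)}

lemma IsAdmissible.of_succ (hQ : IsAdmissible (d + 1) Q) : IsAdmissible d Q where
  apply_zero := hQ.apply_zero
  add_mem q hq r hr := hQ.add_mem q hq r (polyMap_mono d.le_succ hr)
  diff_mem := hQ.diff_mem

lemma IsAdmissible.union (hQ : IsAdmissible d Q) (hQ' : IsAdmissible d Q') :
    IsAdmissible d (Q ∪ Q') where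
  apply_zero q := Or.rec (hQ.apply_zero q) (hQ'.apply_zero q)
  add_mem q hq r hr := hq.imp (hQ.add_mem q · r hr) (hQ'.add_mem q · r hr)
  diff_mem q hq v := hq.imp (hQ.diff_mem q · v) (hQ'.diff_mem q · v)

lemma isAdmissible_empty : IsAdmissible d (∅ : Set (M → G)) where
  apply_zero _ h := h.elim
  add_mem _ h := h.elim
  diff_mem _ h := h.elim

variable (d) in
/-- The union of the classes modulo `polyMap M G d` of the maps in `S`. -/
def cosets (S : Set (M → G)) : Set (M → G) := {r | ∃ q ∈ S, r - q ∈ polyMap M G d}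

lemma isAdmissible_cosets {S : Set (M → G)} (hS : S ⊆ polyMap M G (d + 1)) :
    IsAdmissible d (cosets d S) where
  apply_zero := by
    rintro r ⟨q, hq, hrq⟩
    simpa [apply_zero_of_mem_polyMap (hS hq)] using apply_zero_of_mem_polyMap hrq
  add_mem := by
    rintro r ⟨q, hq, hrq⟩ s hs
    exact ⟨q, hq, by simpa [add_sub_right_comm] using add_mem hrq hs⟩
  diff_mem := fun r ⟨q, hq, hrq⟩ v => ⟨q, hq, diff_sub_mem_polyMap (hS hq) hrq v⟩

/-- The classes of the maps in `S` are adjoined one by one, recentring all of them at the one that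
is being adjoined: that class then consists of maps of degree at most `d`. -/
lemma IPRecurrent.union_cosets (hL : IsSyndeticFamily L)
    (hlow : ∀ Q : Set (M → G), IsAdmissible d Q → IPRecurrent L x Q →
      IPRecurrent L x (Q ∪ polyMap M G d))
    (hQ : IsAdmissible (d + 1) Q) (hQL : IPRecurrent L x Q) {S : Set (M → G)} (hS : S.Finite)
    (hSd : S ⊆ polyMap M G (d + 1)) :
    ∀ ψ ∈ polyMap M G (d + 1), IPRecurrent L x (Q ∪ cosets d ((· - ψ) '' S)) := by
  have hadm : ∀ S' : Set (M → G), S' ⊆ polyMap M G (d + 1) → ∀ ψ ∈ polyMap M G (d + 1),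
      IsAdmissible d (Q ∪ cosets d ((· - ψ) '' S')) := fun S' hS' ψ hψ =>
    hQ.of_succ.union (isAdmissible_cosets (Set.image_subset_iff.2 fun q hq => sub_mem (hS' hq) hψ))
  induction S, hS using Set.Finite.induction_on with
  | empty => simpa [cosets] using fun _ _ => hQL
  | @insert q₀ S _ _ ih =>
    intro ψ hψ
    obtain ⟨hq₀, hS⟩ := Set.insert_subset_iff.1 hSd
    refine (hlow _ (hadm S hS q₀ hq₀) (ih hS q₀ hq₀)).of_diff_sub hL (q₀ - ψ)
      (hadm _ hSd ψ hψ).apply_zero ?_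
    rintro r (hr | ⟨_, ⟨q, hq, rfl⟩, hrq⟩) v
    · rw [sub_eq_add_neg]
      exact .inl (.inl (hQ.add_mem _ (hQ.diff_mem r hr v) _ (neg_mem (sub_mem hq₀ hψ))))
    · have hv := diff_sub_mem_polyMap (sub_mem (hSd hq) hψ) hrq v
      rcases hq with rfl | hq
      · exact .inr hv
      · exact .inl (.inr ⟨q - q₀, ⟨q, hq, rfl⟩, by convert hv using 1; abel⟩)

lemma IPRecurrent.union_polyMap (hL : IsSyndeticFamily L) (hQ : IsAdmissible d Q)
    (hQL : IPRecurrent L x Q) : IPRecurrent L x (Q ∪ polyMap M G d) := by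
  induction d generalizing Q with
  | zero => exact hQL.union_zero hL
  | succ d ih =>
    intro Φ hΦ
    refine hQL.union_cosets hL (fun _ => ih) hQ
      (Φ.finite_toSet.inter_of_left (polyMap M G (d + 1))) Set.inter_subset_right 0 (zero_mem _) Φ
      fun φ hφ => (hΦ hφ).imp_right fun hφd => ?_
    exact ⟨φ, ⟨φ, ⟨hφ, hφd⟩, sub_zero φ⟩, by simp⟩

theorem ipRecurrent_polyMap (hL : IsSyndeticFamily L) (x : ℕ → M) (d : ℕ) :
    IPRecurrent L x (polyMap M G d : Set (M → G)) := by
  simpa using (ipRecurrent_empty hL x).union_polyMap hL (isAdmissible_empty (d := d))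

end IPRecurrence

section Ultrafilters

attribute [local instance] Ultrafilter.add Ultrafilter.addSemigroup

/-- The left ideal generated by `r` is minimal: `r` can be recovered from each of its elements. -/
def GeneratesMinimalLeftIdeal {M : Type*} [Add M] (r : M) : Prop :=
  ∀ s, ∃ u, u + (s + r) = r

lemma generatesMinimalLeftIdeal_of_minimal {M : Type*} [AddSemigroup M] [TopologicalSpace M]
    [CompactSpace M] [T2Space M] (hcont : ∀ r : M, Continuous (· + r)) {e : M} (he : e + e = e)
    (hmin : ∀ q, q + q = q → q + e = q → e + q = q → q = e) : GeneratesMinimalLeftIdeal e := by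
  intro s
  obtain ⟨f, ⟨u, hu⟩, hf⟩ := exists_idempotent_in_compact_add_subsemigroup hcont
    (Set.range (· + (s + e))) ⟨_, s, rfl⟩ (isCompact_range (hcont _))
    (by rintro _ ⟨a, rfl⟩ _ ⟨b, rfl⟩; exact ⟨a + (s + e) + b, by simp only [add_assoc]⟩)
  have hfe : f + e = f := by simp only [← hu, add_assoc, he]
  refine ⟨e + u, ?_⟩
  rw [add_assoc, show u + (s + e) = f from hu]
  exact hmin (e + f) (by rw [add_assoc, ← add_assoc f, hfe, hf]) (by rw [add_assoc, hfe])
    (by rw [← add_assoc, he])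

lemma ultrafilter_map_add {M N F : Type*} [Add M] [Add N] [FunLike F M N] [AddHomClass F M N]
    (f : F) (U V : Ultrafilter M) : (U + V).map f = U.map f + V.map f := by
  ext A
  change (∀ᶠ x in U, ∀ᶠ y in V, f (x + y) ∈ A) ↔ ∀ᶠ x in U, ∀ᶠ y in V, f x + f y ∈ A
  simp only [map_add]

/-- The sets that are members of some ultrafilter in the left ideal generated by `r`. -/
def leftIdealFamily {G : Type*} [Add G] (r : Ultrafilter G) : Set (Set G) :=
  {B | ∃ s, B ∈ s + r}

lemma GeneratesMinimalLeftIdeal.mem_leftIdealFamily {G : Type*} [AddSemigroup G]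
    {r : Ultrafilter G} (hr : GeneratesMinimalLeftIdeal r) {B : Set G} (hB : B ∈ r) :
    B ∈ leftIdealFamily r := by
  obtain ⟨u, hu⟩ := hr r
  exact ⟨u + r, by rwa [add_assoc, hu]⟩

lemma GeneratesMinimalLeftIdeal.isSyndeticFamily {G : Type*} [AddGroup G] {r : Ultrafilter G}
    (hr : GeneratesMinimalLeftIdeal r) : IsSyndeticFamily (leftIdealFamily r) where
  shift := by
    rintro B ⟨s, hs⟩ g
    refine ⟨pure (-g) + s, ?_⟩
    change ∀ᶠ x in s, ∀ᶠ y in r, g + (-g + x + y) ∈ B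
    simp only [add_assoc, add_neg_cancel_left]
    exact hs
  mono := fun B ⟨s, hs⟩ B' h => ⟨s, Filter.mem_of_superset hs h⟩
  cover := by
    rintro B ⟨s, hs⟩
    obtain ⟨C, hC⟩ := (isCompact_range (Ultrafilter.continuous_add_left r)).elim_finite_subcover
      (fun t : G => {q : Ultrafilter G | {n | t + n ∈ B} ∈ q})
      (fun t => ultrafilter_isOpen_basic _) (by
        rintro _ ⟨v, rfl⟩
        obtain ⟨u, hu⟩ := hr v
        rw [← hu, ← add_assoc] at hs
        have hsv : ∀ᶠ t in s + u, {n | t + n ∈ B} ∈ v + r := hs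
        exact Set.mem_iUnion.2 hsv.exists)
    refine ⟨C, fun B' ⟨v, hv⟩ => ?_⟩
    obtain ⟨t, ht, h⟩ := Set.mem_iUnion₂.1 (hC ⟨v, rfl⟩)
    exact ⟨t, ht, v, Filter.inter_mem hv h⟩

/-- The embedding of `βℕ` into `βℤ`. -/
def toInt (p : Ultrafilter ℕ) : Ultrafilter ℤ := p.map (Nat.castAddMonoidHom ℤ)

lemma toInt_add (p q : Ultrafilter ℕ) : toInt (p + q) = toInt p + toInt q :=
  ultrafilter_map_add _ p q

lemma toInt_injective : Function.Injective toInt := by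
  refine fun p q h => Ultrafilter.coe_injective ?_
  exact Filter.map_injective (Nat.cast_injective (R := ℤ)) (congrArg Ultrafilter.toFilter h :)

lemma exists_toInt_eq {r : Ultrafilter ℤ} (h : ∀ᶠ n : ℤ in r, 0 ≤ n) : ∃ q, toInt q = r := by
  refine ⟨r.map Int.toNat, Ultrafilter.coe_injective ?_⟩
  rw [toInt, Ultrafilter.coe_map, Ultrafilter.coe_map, Filter.map_map]
  exact (Filter.map_congr (h.mono fun n hn => Int.toNat_of_nonneg hn)).trans Filter.map_id

lemma GeneratesMinimalLeftIdeal.eventually_ge {p : Ultrafilter ℕ}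
    (hp : GeneratesMinimalLeftIdeal p) (N : ℕ) : ∀ᶠ n in p, N ≤ n := by
  obtain ⟨u, hu⟩ := hp (pure N)
  rw [← hu]
  change ∀ᶠ x in u, ∀ᶠ y in p, N ≤ x + (N + y)
  exact .of_forall fun x => .of_forall fun y => by lia

lemma generatesMinimalLeftIdeal_toInt {p : Ultrafilter ℕ} (hp : GeneratesMinimalLeftIdeal p)
    (hpp : p + p = p) : GeneratesMinimalLeftIdeal (toInt p) := by
  intro s
  have hnonneg : ∀ᶠ n : ℤ in s + toInt p, 0 ≤ n := by
    change ∀ᶠ x in s, ∀ᶠ n : ℕ in p, 0 ≤ x + (n : ℤ)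
    exact .of_forall fun x => (hp.eventually_ge (-x).toNat).mono fun n hn => by lia
  obtain ⟨q, hq⟩ := exists_toInt_eq hnonneg
  have hqp : q + p = q := toInt_injective (by rw [toInt_add, hq, add_assoc, ← toInt_add, hpp])
  obtain ⟨u, hu⟩ := hp q
  exact ⟨toInt u, by rw [← hq, ← toInt_add, ← hqp, hu]⟩

lemma IsMinimalIdempotent.generatesMinimalLeftIdeal {p : Ultrafilter ℕ}
    (hp : IsMinimalIdempotent p) : GeneratesMinimalLeftIdeal p :=
  generatesMinimalLeftIdeal_of_minimal Ultrafilter.continuous_add_left hp.1 hp.2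

end Ultrafilters

section PolyJSet

/-- The polynomial J-sets, with the polynomials from `R` applied to the sums in the definition of
J-sets, and with arbitrarily late index sets. -/
def IsPolyJSet (B : Set ℕ) : Prop :=
  ∀ F R : Finset (ℕ → ℕ), (∀ P ∈ R, IsPolyZeroConst P) → ∀ N : ℕ,
    ∃ (α : ℕ) (H : Finset ℕ), H.Nonempty ∧ (∀ t ∈ H, N < t) ∧
      ∀ f ∈ F, ∀ P ∈ R, α + P (∑ t ∈ H, f t) ∈ B

lemma IsPolyZeroConst.exists_mem_polyMap {P : ℕ → ℕ} (hP : IsPolyZeroConst P) :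
    ∃ d, ∀ f : ℕ → ℕ, (fun u : (ℕ → ℕ) → ℕ => (P (u f) : ℤ)) ∈ polyMap _ ℤ d := by
  obtain ⟨Q, hQ0, hQ⟩ := hP
  refine ⟨(Q.map (Nat.castRingHom ℤ)).natDegree, fun f => ?_⟩
  convert comp_mem_polyMap ((Nat.castAddMonoidHom ℤ).comp (Pi.evalAddMonoidHom (fun _ => ℕ) f))
    (eval_mem_polyMap (P := Q.map (Nat.castRingHom ℤ)) (by simp [hQ0]) le_rfl) using 1
  ext u
  simp [hQ]

lemma IsMinimalIdempotent.isPolyJSet {p : Ultrafilter ℕ} (hp : IsMinimalIdempotent p)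
    {B : Set ℕ} (hB : B ∈ p) : IsPolyJSet B := by
  classical
  intro F R hR N
  have hmin := generatesMinimalLeftIdeal_toInt hp.generatesMinimalLeftIdeal hp.1
  choose! d hd using fun P hP => (hR P hP).exists_mem_polyMap
  obtain ⟨H, hH, hNH, s, hs⟩ := ipRecurrent_polyMap hmin.isSyndeticFamily
    (fun t (f : ℕ → ℕ) => f t) (R.sup d) ((F ×ˢ R).image fun a u => (a.2 (u a.1) : ℤ))
    (fun _ h => by
      obtain ⟨a, ha, rfl⟩ := Finset.mem_image.1 h
      have haR := (Finset.mem_product.1 ha).2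
      exact polyMap_mono (Finset.le_sup haR) (hd _ haR _))
    (Nat.cast '' B) (hmin.mem_leftIdealFamily (Filter.image_mem_map hB)) N
  obtain ⟨_, ⟨α, -, rfl⟩, hα⟩ := Ultrafilter.nonempty_of_mem hs
  refine ⟨α, H, hH, hNH, fun f hf P hP => ?_⟩
  obtain ⟨b, hb, hbα⟩ := hα _ (Finset.mem_image_of_mem _ (Finset.mk_mem_product hf hP))
  rw [Finset.sum_apply, ← Nat.cast_add, Nat.cast_inj, add_comm] at hbα
  exact hbα ▸ hb

end PolyJSet

section Trees

/-- A `p`-branching tree of finite sequences: those in `𝒯` have `p`-many one-term extensions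
in `𝒯`. -/
structure IsTree (p : Ultrafilter ℕ) (𝒯 : Set (List ℕ)) : Prop where
  nil_mem : [] ∈ 𝒯
  append_mem : ∀ w ∈ 𝒯, {v | w ++ [v] ∈ 𝒯} ∈ p

/-- The terms of `w` can be the first values `v₀, v₁, …` in a choice of `∑ a l * v l ∈ A` made
coordinate by coordinate, each for `p`-many values. -/
def IsLinCombPrefix (p : Ultrafilter ℕ) : ∀ {m : ℕ}, (Fin m → ℕ) → Set ℕ → List ℕ → Prop
  | m, a, A, [] => A ∈ linComb m a fun _ => p
  | 0, _, _, _ :: _ => True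
  | _ + 1, a, A, v :: w => IsLinCombPrefix p (fun i => a i.succ) {y | a 0 * v + y ∈ A} w

variable {p : Ultrafilter ℕ} {m : ℕ} {a : Fin m → ℕ} {A : Set ℕ}

lemma IsLinCombPrefix.append_mem {w : List ℕ} (h : IsLinCombPrefix p a A w) :
    {v | IsLinCombPrefix p a A (w ++ [v])} ∈ p := by
  induction w generalizing m A with
  | nil =>
    cases m with
    | zero => exact Filter.univ_mem
    | succ m =>
      simp only [List.nil_append, IsLinCombPrefix] at h ⊢
      exact h
  | cons v w ih =>
    cases m with
    | zero => exact Filter.univ_mem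
    | succ m => exact ih h

lemma isTree_isLinCombPrefix (hA : A ∈ linComb m a fun _ => p) :
    IsTree p {w | IsLinCombPrefix p a A w} where
  nil_mem := by simpa [IsLinCombPrefix] using hA
  append_mem _ hw := IsLinCombPrefix.append_mem hw

lemma IsLinCombPrefix.sum_mem {v : Fin m → ℕ} (h : IsLinCombPrefix p a A (List.ofFn v)) :
    ∑ l, a l * v l ∈ A := by
  induction m generalizing A with
  | zero => simpa [IsLinCombPrefix, linComb] using h
  | succ m ih =>
    rw [List.ofFn_succ] at h
    simpa [Fin.sum_univ_succ] using ih h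

end Trees

section Construction

lemma IsPolyZeroConst.apply_zero {P : ℕ → ℕ} (hP : IsPolyZeroConst P) : P 0 = 0 := by
  obtain ⟨Q, hQ0, hQ⟩ := hP
  rw [hQ, ← Polynomial.coeff_zero_eq_eval_zero, hQ0]

lemma IsPolyZeroConst.exists_add_eq {P : ℕ → ℕ} (hP : IsPolyZeroConst P) (x : ℕ) :
    ∃ R, IsPolyZeroConst R ∧ ∀ y, P (x + y) = P x + R y := by
  obtain ⟨Q, -, hQ⟩ := hP
  set W := Polynomial.taylor x Q with hW
  refine ⟨fun y => (W.divX * Polynomial.X).eval y, ⟨_, by simp, fun _ => rfl⟩, fun y => ?_⟩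
  have h := congrArg (Polynomial.eval y) W.divX_mul_X_add
  rw [Polynomial.eval_add, Polynomial.eval_C, hW, Polynomial.taylor_coeff_zero,
    Polynomial.taylor_eval, ← hQ, ← hQ] at h
  rw [add_comm x, ← h, add_comm]

/-- The points of `S` that can be moved within `S` by `p`-many summands (`S⋆` in the literature). -/
def starSet (p : Ultrafilter ℕ) (S : Set ℕ) : Set ℕ := {v | v ∈ S ∧ {z | v + z ∈ S} ∈ p}

lemma IdempotentUF.starSet_mem {p : Ultrafilter ℕ} (hp : IdempotentUF p) {S : Set ℕ}
    (hS : S ∈ p) : starSet p S ∈ p := by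
  refine Filter.inter_mem hS ?_
  have h : S ∈ uAdd p p := by rwa [hp]
  exact h

lemma IdempotentUF.shift_starSet_mem {p : Ultrafilter ℕ} (hp : IdempotentUF p) {S : Set ℕ} {v : ℕ}
    (hv : v ∈ starSet p S) : {z | v + z ∈ starSet p S} ∈ p := by
  filter_upwards [hp.starSet_mem hv.2] with z hz
  exact ⟨hz.1, by simpa [add_assoc] using hz.2⟩

/-- A partially built point of a tree: the values of the completed blocks, and the sums
`∑ α (G i)` and `∑ ∑ f i t` accumulated in the current one. -/
structure State where
  blocks : List ℕ
  shift : ℕ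
  sum : ℕ

/-- Continue the current block by a move `(α, H)`, taking the values of `f` along `H`. -/
def State.extend (st : State) (c : ℕ × Finset ℕ) (f : ℕ → ℕ) : State :=
  ⟨st.blocks, st.shift + c.1, st.sum + ∑ t ∈ c.2, f t⟩

/-- The value of the current block, if it is completed with the polynomial `P`. -/
def State.value (st : State) (P : ℕ → ℕ) : ℕ := st.shift + P st.sum

/-- Complete the current block with the polynomial `P` and start a new one. -/
def State.close (st : State) (P : ℕ → ℕ) : State := ⟨st.blocks ++ [st.value P], 0, 0⟩

/-- The states that runs with the moves `c` along chains of sets strictly below `F` can produce. -/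
inductive Reachable (T : Finset (ℕ → ℕ)) (c : Finset (ℕ → ℕ) → ℕ × Finset ℕ) :
    Finset (ℕ → ℕ) → State → Prop
  | start (F : Finset (ℕ → ℕ)) : Reachable T c F ⟨[], 0, 0⟩
  | extend {F G : Finset (ℕ → ℕ)} {f : ℕ → ℕ} {st : State} (hFG : F ⊂ G) (hf : f ∈ F)
      (h : Reachable T c F st) : Reachable T c G (st.extend (c F) f)
  | close {F G : Finset (ℕ → ℕ)} {f P : ℕ → ℕ} {st : State} (hFG : F ⊂ G) (hf : f ∈ F)
      (hP : P ∈ T) (h : Reachable T c F st) : Reachable T c G ((st.extend (c F) f).close P)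

variable {p : Ultrafilter ℕ} {𝒯 : Set (List ℕ)} {T F F' : Finset (ℕ → ℕ)}
  {c c' : Finset (ℕ → ℕ) → ℕ × Finset ℕ} {st : State}

lemma Reachable.mono (h : Reachable T c F st) (hFF' : F ⊆ F') : Reachable T c F' st := by
  cases h with
  | start => exact .start F'
  | extend hF hf h => exact .extend (hF.trans_subset hFF') hf h
  | close hF hf hP h => exact .close (hF.trans_subset hFF') hf hP h

lemma Reachable.congr (h : Reachable T c F st) (hc : ∀ G ⊂ F, c G = c' G) :
    Reachable T c' F st := by
  induction h with
  | start F => exact .start F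
  | extend hFG hf _ ih =>
    rw [hc _ hFG]
    exact .extend hFG hf (ih fun K hK => hc K (hK.trans hFG))
  | close hFG hf hP _ ih =>
    rw [hc _ hFG]
    exact .close hFG hf hP (ih fun K hK => hc K (hK.trans hFG))

variable (T F c) in
lemma finite_setOf_reachable : {st | Reachable T c F st}.Finite := by
  classical
  induction F using Finset.strongInduction with
  | H F ih =>
    let nexts (G : Finset (ℕ → ℕ)) : Set State :=
      Set.image2 (fun st f => st.extend (c G) f) {st | Reachable T c G st} G
    have hnexts : ∀ G ∈ F.ssubsets, (nexts G ∪ Set.image2 State.close (nexts G) T).Finite := by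
      intro G hG
      have hfin := (ih G (Finset.mem_ssubsets.1 hG)).image2 (fun st f => st.extend (c G) f)
        G.finite_toSet
      exact hfin.union (hfin.image2 _ T.finite_toSet)
    refine ((Set.finite_singleton ⟨[], 0, 0⟩).union
      (F.ssubsets.finite_toSet.biUnion hnexts)).subset ?_
    rintro _ (_ | ⟨hG, hf, h⟩ | ⟨hG, hf, hP, h⟩)
    · exact .inl rfl
    · exact .inr (Set.mem_biUnion (Finset.mem_ssubsets.2 hG) (.inl ⟨_, h, _, hf, rfl⟩))
    · exact .inr (Set.mem_biUnion (Finset.mem_ssubsets.2 hG)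
        (.inr ⟨_, ⟨_, h, _, hf, rfl⟩, _, hP, rfl⟩))

/-- The completed blocks lie in the tree, and `p`-many summands keep the value of the current one
in the star set of the admissible next values. -/
def Extendable (p : Ultrafilter ℕ) (𝒯 : Set (List ℕ)) (T : Finset (ℕ → ℕ)) (st : State) : Prop :=
  st.blocks ∈ 𝒯 ∧ ∀ P ∈ T, {z | st.value P + z ∈ starSet p {v | st.blocks ++ [v] ∈ 𝒯}} ∈ p

lemma extendable_of_mem (hp : IdempotentUF p) (h𝒯 : IsTree p 𝒯)
    (hTP : ∀ P ∈ T, IsPolyZeroConst P) {w : List ℕ} (hw : w ∈ 𝒯) :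
    Extendable p 𝒯 T ⟨w, 0, 0⟩ :=
  ⟨hw, fun P hP => by
    simpa [State.value, (hTP P hP).apply_zero] using hp.starSet_mem (h𝒯.append_mem w hw)⟩

/-- The requirements on the move `mv` at `F`, given the moves `c` at the proper subsets of `F`. -/
structure IsMove (p : Ultrafilter ℕ) (𝒯 : Set (List ℕ)) (T F : Finset (ℕ → ℕ))
    (c : Finset (ℕ → ℕ) → ℕ × Finset ℕ) (mv : ℕ × Finset ℕ) : Prop where
  nonempty : mv.2.Nonempty
  lt : ∀ G ⊂ F, ∀ s ∈ (c G).2, ∀ t ∈ mv.2, s < t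
  value_mem : ∀ st, Reachable T c F st → ∀ f ∈ F, ∀ P ∈ T,
    (st.extend mv f).value P ∈ starSet p {v | st.blocks ++ [v] ∈ 𝒯}

lemma IsMove.congr {mv : ℕ × Finset ℕ} (h : IsMove p 𝒯 T F c mv) (hc : ∀ G ⊂ F, c G = c' G) :
    IsMove p 𝒯 T F c' mv where
  nonempty := h.nonempty
  lt G hG := hc G hG ▸ h.lt G hG
  value_mem st hst := h.value_mem st (hst.congr fun G hG => (hc G hG).symm)

lemma Reachable.extendable (hp : IdempotentUF p) (h𝒯 : IsTree p 𝒯)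
    (hTP : ∀ P ∈ T, IsPolyZeroConst P) (h : Reachable T c F st)
    (hc : ∀ G ⊂ F, IsMove p 𝒯 T G c (c G)) : Extendable p 𝒯 T st := by
  induction h with
  | start => exact extendable_of_mem hp h𝒯 hTP h𝒯.nil_mem
  | extend hFG hf h ih =>
    exact ⟨(ih fun K hK => hc K (hK.trans hFG)).1, fun P hP =>
      hp.shift_starSet_mem ((hc _ hFG).value_mem _ h _ hf P hP)⟩
  | close hFG hf hP h _ =>
    exact extendable_of_mem hp h𝒯 hTP ((hc _ hFG).value_mem _ h _ hf _ hP).1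

lemma exists_move (hJ : ∀ B ∈ p, IsPolyJSet B) (hTP : ∀ P ∈ T, IsPolyZeroConst P)
    {S : Finset State} (hS : ∀ st ∈ S, Extendable p 𝒯 T st) (F : Finset (ℕ → ℕ)) (N : ℕ) :
    ∃ mv : ℕ × Finset ℕ, mv.2.Nonempty ∧ (∀ t ∈ mv.2, N < t) ∧ ∀ st ∈ S, ∀ f ∈ F, ∀ P ∈ T,
      (st.extend mv f).value P ∈ starSet p {v | st.blocks ++ [v] ∈ 𝒯} := by
  classical
  choose! R hR hadd using fun P hP x => (hTP P hP).exists_add_eq x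
  have hB : (⋂ st ∈ S, ⋂ P ∈ T, {z | st.value P + z ∈ starSet p {v | st.blocks ++ [v] ∈ 𝒯}}) ∈ p :=
    (Filter.biInter_finset_mem S).2 fun st hst =>
      (Filter.biInter_finset_mem T).2 fun P hP => (hS st hst).2 P hP
  obtain ⟨α, H, hH, hNH, hα⟩ := hJ _ hB F ((S ×ˢ T).image fun a => R a.2 a.1.sum)
    (fun _ h => by
      obtain ⟨a, ha, rfl⟩ := Finset.mem_image.1 h
      exact hR _ (Finset.mem_product.1 ha).2 _) N
  refine ⟨(α, H), hH, hNH, fun st hst f hf P hP => ?_⟩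
  have hmem := hα f hf _ (Finset.mem_image_of_mem _ (Finset.mk_mem_product hst hP))
  have hstP : st.value P + (α + R P st.sum (∑ t ∈ H, f t)) ∈ starSet p _ :=
    Set.mem_iInter₂.1 (Set.mem_iInter₂.1 hmem st hst) P hP
  convert hstP using 1
  simp only [State.value, State.extend, hadd P hP]
  ring

lemma exists_forall_of_wellFoundedLT {ι β : Type*} [LT ι] [WellFoundedLT ι] [Nonempty β]
    {Q : ι → (ι → β) → β → Prop}
    (hcongr : ∀ i g g' b, Q i g b → (∀ j < i, g j = g' j) → Q i g' b)
    (hex : ∀ i g, (∀ j < i, Q j g (g j)) → ∃ b, Q i g b) : ∃ g, ∀ i, Q i g (g i) := by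
  classical
  let trunc (i : ι) (g : ∀ j, j < i → β) : ι → β :=
    fun j => if h : j < i then g j h else Classical.arbitrary β
  let g : ι → β := WellFoundedLT.fix fun i g => Classical.epsilon (Q i (trunc i g))
  refine ⟨g, fun i => ?_⟩
  induction i using WellFoundedLT.induction with
  | ind i ih =>
    have htrunc : ∀ j < i, trunc i (fun j _ => g j) j = g j := fun j hj => dif_pos hj
    obtain ⟨b, hb⟩ := hex i g ih
    rw [show g i = _ from WellFoundedLT.fix_eq _ i]
    exact hcongr _ _ _ _ (Classical.epsilon_spec ⟨b, hcongr _ _ _ _ hb fun j hj =>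
      (htrunc j hj).symm⟩) htrunc

lemma exists_forall_isMove (hp : IdempotentUF p) (hJ : ∀ B ∈ p, IsPolyJSet B)
    (h𝒯 : IsTree p 𝒯) (hTP : ∀ P ∈ T, IsPolyZeroConst P) :
    ∃ c : Finset (ℕ → ℕ) → ℕ × Finset ℕ, ∀ F, IsMove p 𝒯 T F c (c F) := by
  classical
  refine exists_forall_of_wellFoundedLT (fun F c c' mv h hc => h.congr hc) fun F c hc => ?_
  obtain ⟨mv, hne, hN, hval⟩ := exists_move (S := (finite_setOf_reachable T F c).toFinset) hJ hTP
    (fun st hst => ((Set.Finite.mem_toFinset _).1 hst).extendable hp h𝒯 hTP hc) F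
    (F.ssubsets.sup fun G => (c G).2.sup id)
  refine ⟨mv, hne, fun G hG s hs t ht => lt_of_le_of_lt ?_ (hN t ht), fun st hst =>
    hval st ((Set.Finite.mem_toFinset _).2 hst)⟩
  exact (Finset.le_sup (f := id) hs).trans
    (Finset.le_sup (f := fun G => (c G).2.sup id) (Finset.mem_ssubsets.2 hG))

section Runs

variable {G : ℕ → Finset (ℕ → ℕ)} {f : ℕ → ℕ → ℕ} {w : List ℕ} {β : Finset ℕ} {N n : ℕ}

/-- The state after completed blocks with values `w` and a current block with index set `β`, in
the run with moves `c` along the sets `G i` and the functions `f i`. -/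
def runState (c : Finset (ℕ → ℕ) → ℕ × Finset ℕ) (G : ℕ → Finset (ℕ → ℕ)) (f : ℕ → ℕ → ℕ)
    (w : List ℕ) (β : Finset ℕ) : State :=
  ⟨w, ∑ i ∈ β, (c (G i)).1, ∑ i ∈ β, ∑ t ∈ (c (G i)).2, f i t⟩

lemma runState_insert {k : ℕ} (hk : k ∉ β) :
    runState c G f w (insert k β) = (runState c G f w β).extend (c (G k)) (f k) := by
  simp only [runState, State.extend, Finset.sum_insert hk, add_comm]

lemma reachable_runState (hG : StrictMono G) (hf : ∀ i, f i ∈ G i)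
    (h : Reachable T c (G N) ⟨w, 0, 0⟩) (hNβ : ∀ i ∈ β, N ≤ i) (hNn : N ≤ n)
    (hβn : ∀ i ∈ β, i < n) : Reachable T c (G n) (runState c G f w β) := by
  induction β using Finset.induction_on_max generalizing n with
  | empty => exact h.mono (hG.monotone hNn)
  | insert k β hk ih =>
    rw [Finset.forall_mem_insert] at hNβ hβn
    rw [runState_insert fun hkβ => (hk k hkβ).false]
    exact .extend (hG hβn.1) (hf k) (ih hNβ.2 hNβ.1 hk)

lemma reachable_close_runState (hG : StrictMono G) (hf : ∀ i, f i ∈ G i)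
    (h : Reachable T c (G N) ⟨w, 0, 0⟩) (hβ : β.Nonempty) (hNβ : ∀ i ∈ β, N ≤ i)
    (hβn : ∀ i ∈ β, i < n) {P : ℕ → ℕ} (hP : P ∈ T) :
    Reachable T c (G n) ((runState c G f w β).close P) := by
  induction β using Finset.induction_on_max with
  | empty => exact absurd hβ Finset.not_nonempty_empty
  | insert k β hk _ =>
    rw [Finset.forall_mem_insert] at hNβ hβn
    rw [runState_insert fun hkβ => (hk k hkβ).false]
    exact .close (hG hβn.1) (hf k) hP (reachable_runState hG hf h hNβ.2 hNβ.1 hk)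

lemma reachable_ofFn (hG : StrictMono G) (hf : ∀ i, f i ∈ G i) {m : ℕ} {P : Fin m → ℕ → ℕ}
    (hP : ∀ l, P l ∈ T) {β : Fin m → Finset ℕ} (hβ : ∀ l, (β l).Nonempty)
    (hββ : ∀ l l', l < l' → ∀ x ∈ β l, ∀ y ∈ β l', x < y) (hβn : ∀ l, ∀ i ∈ β l, i < n) :
    Reachable T c (G n) ⟨List.ofFn fun l =>
      ∑ i ∈ β l, (c (G i)).1 + P l (∑ i ∈ β l, ∑ t ∈ (c (G i)).2, f i t), 0, 0⟩ := by
  induction m generalizing n with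
  | zero => exact .start _
  | succ m ih =>
    rw [List.ofFn_succ', List.concat_eq_append]
    have hprev : Reachable T c (G ((β (Fin.last m)).min' (hβ _))) ⟨_, 0, 0⟩ :=
      ih (fun l => hP l.castSucc) (fun l => hβ l.castSucc)
        (fun l l' h => hββ _ _ (Fin.castSucc_lt_castSucc_iff.2 h))
        fun l i hi => hββ _ _ (Fin.castSucc_lt_last l) i hi _ (Finset.min'_mem _ _)
    exact reachable_close_runState hG hf hprev (hβ _) (fun i hi => Finset.min'_le _ i hi)
      (hβn _) (hP _)

end Runs

theorem polynomial_central_sets_of_isTree (hp : IdempotentUF p) (hJ : ∀ B ∈ p, IsPolyJSet B)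
    (h𝒯 : IsTree p 𝒯) (hTP : ∀ P ∈ T, IsPolyZeroConst P) :
    ∃ (α : Finset (ℕ → ℕ) → ℕ) (H : Finset (ℕ → ℕ) → Finset ℕ),
      (∀ F, (H F).Nonempty) ∧ (∀ F G, F ⊂ G → ∀ x ∈ H F, ∀ y ∈ H G, x < y) ∧
      ∀ G : ℕ → Finset (ℕ → ℕ), StrictMono G → ∀ f : ℕ → ℕ → ℕ, (∀ i, f i ∈ G i) →
        ∀ {m : ℕ} (P : Fin m → ℕ → ℕ), (∀ l, P l ∈ T) →
        ∀ β : Fin m → Finset ℕ, (∀ l, (β l).Nonempty) →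
          (∀ l l' : Fin m, l < l' → ∀ x ∈ β l, ∀ y ∈ β l', x < y) →
          (List.ofFn fun l => ∑ i ∈ β l, α (G i) + P l (∑ i ∈ β l, ∑ t ∈ H (G i), f i t)) ∈ 𝒯 := by
  classical
  obtain ⟨c, hc⟩ := exists_forall_isMove hp hJ h𝒯 hTP
  refine ⟨fun F => (c F).1, fun F => (c F).2, fun F => (hc F).nonempty, fun F G hFG =>
    (hc G).lt F hFG, fun G hG f hf m P hP β hβ hββ => ?_⟩
  obtain ⟨n, hn⟩ := (Finset.univ.biUnion β).exists_nat_subset_range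
  have hβn : ∀ l, ∀ i ∈ β l, i < n := fun l i hi =>
    Finset.mem_range.1 (hn (Finset.mem_biUnion.2 ⟨l, Finset.mem_univ l, hi⟩))
  exact ((reachable_ofFn hG hf hP hβ hββ hβn).extendable hp h𝒯 hTP fun F _ => hc F).1

end Construction

theorem image_linear_comb_polynomial_CST_I_general {m : ℕ} {a : Fin m → ℕ} {p : Ultrafilter ℕ}
    (hp : IdempotentUF p) (hJ : ∀ B ∈ p, IsPolyJSet B) {A : Set ℕ}
    (hA : A ∈ linComb m a fun _ => p) {T : Finset (ℕ → ℕ)} (hTP : ∀ P ∈ T, IsPolyZeroConst P) :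
    ∃ (α : Finset (ℕ → ℕ) → ℕ) (H : Finset (ℕ → ℕ) → Finset ℕ),
      (∀ F, (H F).Nonempty) ∧ (∀ F G, F ⊂ G → ∀ x ∈ H F, ∀ y ∈ H G, x < y) ∧
      ∀ G : ℕ → Finset (ℕ → ℕ), StrictMono G → ∀ f : ℕ → ℕ → ℕ, (∀ i, f i ∈ G i) →
        ∀ P : Fin m → ℕ → ℕ, (∀ l, P l ∈ T) →
        ∀ β : Fin m → Finset ℕ, (∀ l, (β l).Nonempty) →
          (∀ l l' : Fin m, l < l' → ∀ x ∈ β l, ∀ y ∈ β l', x < y) →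
          ∑ l, a l * (∑ i ∈ β l, α (G i) + P l (∑ i ∈ β l, ∑ t ∈ H (G i), f i t)) ∈ A := by
  obtain ⟨α, H, hne, hlt, hmem⟩ :=
    polynomial_central_sets_of_isTree hp hJ (isTree_isLinCombPrefix hA) hTP
  exact ⟨α, H, hne, hlt, fun G hG f hf P hP β hβ hββ =>
    IsLinCombPrefix.sum_mem (hmem G hG f hf P hP β hβ hββ)⟩

/-- Polynomial-image extension of the linear-combination polynomial central sets theorem,
single minimal idempotent. -/
theorem image_linear_comb_polynomial_CST_I (m : ℕ) (hm : 1 ≤ m)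
    (h : ℕ → ℕ) (hh : IsPolyZeroConst h) (a : Fin m → ℕ)
    (p : Ultrafilter ℕ) (hp : IsMinimalIdempotent p)
    (A : Set ℕ) (hA : A ∈ (linComb m a fun _ => p).map h)
    (T : Finset (ℕ → ℕ)) (hT : T.Nonempty) (hTP : ∀ P ∈ T, IsPolyZeroConst P) :
    ∃ (α : Finset (ℕ → ℕ) → ℕ) (H : Finset (ℕ → ℕ) → Finset ℕ),
      (∀ F : Finset (ℕ → ℕ), F.Nonempty → (H F).Nonempty) ∧
      (∀ F G : Finset (ℕ → ℕ), F.Nonempty → F ⊂ G →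
        ∀ x ∈ H F, ∀ y ∈ H G, x < y) ∧
      (∀ G : ℕ → Finset (ℕ → ℕ),
        (∀ i, (G i).Nonempty) → (∀ i j, i < j → G i ⊂ G j) →
        ∀ f : ℕ → ℕ → ℕ, (∀ i, f i ∈ G i) →
        ∀ P : Fin m → ℕ → ℕ, (∀ l, P l ∈ T) →
        ∀ β : Fin m → Finset ℕ,
          (∀ l, (β l).Nonempty) →
          (∀ l l' : Fin m, l < l' → ∀ x ∈ β l, ∀ y ∈ β l', x < y) →
          h (∑ l : Fin m, a l * ((∑ i ∈ β l, α (G i)) +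
              P l (∑ i ∈ β l, ∑ t ∈ H (G i), f i t))) ∈ A) := by
  obtain ⟨α, H, hne, hlt, hmem⟩ := image_linear_comb_polynomial_CST_I_general hp.1
    (fun B => hp.isPolyJSet) (Ultrafilter.mem_map.1 hA) hTP
  exact ⟨α, H, fun F _ => hne F, fun F G _ => hlt F G, fun G _ hG f => hmem G (hG · ·) f⟩

end MultiCST
end

section
/- Let m ∈ ℕ with m ≥ 1, let a₁,…,a_m ∈ ℕ, and let A ⊆ ℕ. Then: (1) there exist functions α : 𝒫_f(ℕ^ℕ) → ℕ and H : 𝒫_f(ℕ^ℕ) → 𝒫_f(ℕ) such that (a) whenever F ⊊ G in 𝒫_f(ℕ^ℕ), max H(F) < min H(G), and (b) whenever G₁ ⊊ G₂ ⊊ ⋯ is an infinite strictly increasing chain in 𝒫_f(ℕ^ℕ), f_i ∈ G_i for each i ∈ ℕ, and β₁ < ⋯ < β_m are in 𝒫_f(ℕ), then Σ_{l=1}^m a_l·(Σ_{i∈β_l}(α(G_i) + Σ_{t∈H(G_i)}f_i(t))) ∈ A — if and only if there exists an idempotent ultrafilter p ∈ 𝒥 such that A ∈ a₁·p + ⋯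 + a_m·p; and (2) there exist functions α₁,…,α_m : 𝒫_f(ℕ^ℕ) → ℕ and H₁,…,H_m : 𝒫_f(ℕ^ℕ) → 𝒫_f(ℕ) satisfying (a) for each H_l and such that, under the hypotheses of (b), Σ_{l=1}^m a_l·(Σ_{i∈β_l}(α_l(G_i) + Σ_{t∈H_l(G_i)}f_i(t))) ∈ A — if and only if there exist idempotent ultrafilters p₁,…,p_m ∈ 𝒥 such that A ∈ a₁·p₁ + ⋯ + a_m·p_m. -/
namespace MultiCST

/-!
Given `α` and `H`, call the sums of values `α(Gᵢ) + ∑_{t ∈ H(Gᵢ)} fᵢ(t)`, `fᵢ ∈ Gᵢ`, along chains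
`F ⊂ G₁ ⊂ ⋯ ⊂ Gₙ` the chain sums above `F`. They form a J-set, any two such families contain a
third, and if `x` is a chain sum ending in `G`, then adding to `x` a chain sum above `G` gives a
chain sum above `F`. As `𝒥` is a closed left ideal of `βℕ`, some idempotent of `𝒥` therefore
contains all these families, and unfolding membership in `a₁·p₁ + ⋯ + a_m·p_m` block by block then
produces a linear combination in `A`.

For the converse put `q_k = a_k·p_k + ⋯ + a_m·p_m`. Since `a_k·p_k` is idempotent, `q_k` equals
both `a_k·p_k + q_{k+1}` and `a_k·p_k + q_k`: a summand chosen from a suitable member of `p_k` may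
begin block `k` or extend it. Recursively in the finite set `F` of functions one therefore chooses,
within members of the `p_i` (which are J-sets), the values `α(F)`, `H(F)`, together with sets
`B_k(F) ∈ q_k` of admissible remainders, such that `B_1(F) ⊆ A` and adding a summand belonging to
`F` to an element of `B_{k+1}(F)` or `B_k(F)` leads into `B_k(G)` for each of the finitely many
`G ⊂ F`.
-/

open Filter

theorem eventually_uAdd {p q : Ultrafilter ℕ} {P : ℕ → Prop} :
    (∀ᶠ x in uAdd p q, P x) ↔ ∀ᶠ x in p, ∀ᶠ y in q, P (x + y) := Iff.rfl

theorem uAdd_assoc (p q r : Ultrafilter ℕ) : uAdd (uAdd p q) r = uAdd p (uAdd q r) :=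
  letI := Ultrafilter.addSemigroup (M := ℕ)
  add_assoc p q r

theorem IdempotentUF.map_mul {p : Ultrafilter ℕ} (hp : IdempotentUF p) (a : ℕ) :
    IdempotentUF (p.map (a * ·)) := by
  refine Ultrafilter.coe_injective (Filter.ext' fun P => ?_)
  calc (∀ᶠ x in uAdd (p.map (a * ·)) (p.map (a * ·)), P x)
      ↔ ∀ᶠ x in p, ∀ᶠ y in p, P (a * (x + y)) := by simp [eventually_uAdd, mul_add]
    _ ↔ ∀ᶠ x in uAdd p p, P (a * x) := Iff.rfl
    _ ↔ ∀ᶠ x in p.map (a * ·), P x := by rw [hp]; rfl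

/-! ### J-sets -/

theorem IsJSet.mono {A B : Set ℕ} (hA : IsJSet A) (h : A ⊆ B) : IsJSet B := fun F hF =>
  let ⟨a, β, hβ, hF⟩ := hA F hF
  ⟨a, β, hβ, fun f hf => h (hF f hf)⟩

theorem not_isJSet_empty : ¬ IsJSet ∅ := fun h =>
  let ⟨_, _, _, h⟩ := h {0} (Finset.singleton_nonempty 0)
  h 0 (Finset.mem_singleton_self 0)

theorem IsJSet.exists_above {A : Set ℕ} (hA : IsJSet A) (F : Finset (ℕ → ℕ)) (N : ℕ) :
    ∃ (a : ℕ) (β : Finset ℕ), β.Nonempty ∧ (∀ t ∈ β, N ≤ t) ∧ ∀ f ∈ F, a + ∑ t ∈ β, f t ∈ A := by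
  classical
  obtain ⟨a, β, hβ, h⟩ := hA (insert 0 (F.image fun f t => f (t + N))) (Finset.insert_nonempty _ _)
  refine ⟨a, β.map (addRightEmbedding N), hβ.map, by simp, fun f hf => ?_⟩
  simpa using h _ (Finset.mem_insert_of_mem (Finset.mem_image_of_mem _ hf))

theorem exists_sum_line_apply {ι κ M : Type*} [Fintype ι] [AddCommMonoid M]
    (l : Combinatorics.Line κ ι) (φ : ι → κ → M) :
    ∃ b, ∀ x, ∑ i, φ i (l x i) = b + ∑ i with l.idxFun i = none, φ i x := by
  refine ⟨∑ i, (l.idxFun i).elim 0 (φ i), fun x => ?_⟩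
  rw [Finset.sum_filter, ← Finset.sum_add_distrib]
  refine Finset.sum_congr rfl fun i _ => ?_
  cases h : l.idxFun i <;> simp [h]

-- Hales-Jewett for words `w` over the alphabet `F`, coloured by the value that the J-set property
-- yields for the function `t ↦ ∑ i, w i (e (i, t))`.
theorem IsJSet.exists_monochromatic {A : Set ℕ} (hA : IsJSet A) {κ : Type*} [Finite κ] (C : ℕ → κ)
    {F : Finset (ℕ → ℕ)} (hF : F.Nonempty) :
    ∃ (a : ℕ) (β : Finset ℕ) (c : κ), β.Nonempty ∧
      ∀ f ∈ F, a + ∑ t ∈ β, f t ∈ A ∧ C (a + ∑ t ∈ β, f t) = c := by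
  classical
  have : Nonempty F := hF.to_subtype
  obtain ⟨ι, _, hι⟩ := Combinatorics.Line.exists_mono_in_high_dimension F κ
  obtain ⟨e, he⟩ := exists_injective_nat (ι × ℕ)
  let g (w : ι → F) (t : ℕ) : ℕ := ∑ i, (w i).1 (e (i, t))
  obtain ⟨a, β, hβ, hg⟩ := hA (Finset.univ.image g) (Finset.univ_nonempty.image g)
  obtain ⟨l, c, hl⟩ := hι fun w => C (a + ∑ t ∈ β, g w t)
  choose b hb using fun t => exists_sum_line_apply l fun i (f : F) => f.1 (e (i, t))
  let active : Finset ι := {i | l.idxFun i = none}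
  have hactive : active.Nonempty := l.proper.imp fun i hi => by simpa [active] using hi
  have hline (f : F) : a + ∑ t ∈ β, b t + ∑ s ∈ (active ×ˢ β).image e, f.1 s =
      a + ∑ t ∈ β, g (l f) t := by
    rw [Finset.sum_image he.injOn, Finset.sum_product_right, add_assoc, ← Finset.sum_add_distrib]
    simp only [g, hb, active]
  refine ⟨a + ∑ t ∈ β, b t, (active ×ˢ β).image e, c, (hactive.product hβ).image e,
    fun f hf => ?_⟩
  rw [hline ⟨f, hf⟩]
  exact ⟨hg _ (Finset.mem_image_of_mem g (Finset.mem_univ _)), hl ⟨f, hf⟩⟩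

theorem isJSet_union_iff {A B : Set ℕ} : IsJSet (A ∪ B) ↔ IsJSet A ∨ IsJSet B := by
  classical
  refine ⟨fun h => ?_, fun h =>
    h.elim (·.mono Set.subset_union_left) (·.mono Set.subset_union_right)⟩
  by_contra hcon
  simp only [IsJSet, not_or, not_forall] at hcon
  obtain ⟨⟨F, hF, hA⟩, ⟨F', -, hB⟩⟩ := hcon
  obtain ⟨a, β, c, hβ, hc⟩ :=
    h.exists_monochromatic (· ∈ A) (hF.mono (Finset.subset_union_left (s₂ := F')))
  by_cases hcA : c
  · exact hA ⟨a, β, hβ, fun f hf => (hc f (Finset.mem_union_left F' hf)).2.mpr hcA⟩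
  · refine hB ⟨a, β, hβ, fun f hf => ?_⟩
    obtain ⟨hAB, hA⟩ := hc f (Finset.mem_union_right F hf)
    exact hAB.resolve_left fun h => hcA (hA.mp h)

/-! ### Idempotents in `𝒥` -/

/-- The filter of all sets whose complement is not a J-set; `𝒥` is the closed set of ultrafilters
finer than it. -/
def jFilter : Filter ℕ :=
  comk (¬ IsJSet ·) not_isJSet_empty (fun _ ht _ hst hs => ht (hs.mono hst))
    fun _ hs _ ht hst => (isJSet_union_iff.1 hst).elim hs ht

theorem memJ_iff_le_jFilter {p : Ultrafilter ℕ} : MemJ p ↔ ↑p ≤ jFilter := by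
  refine ⟨fun h A (hA : ¬ IsJSet Aᶜ) => ?_, fun h A hA => ?_⟩
  · exact Ultrafilter.compl_notMem_iff.1 (mt (h Aᶜ) hA)
  · by_contra hJ
    exact Ultrafilter.compl_notMem_iff.2 hA (h (compl_mem_comk.2 hJ))

theorem jFilter_inf_neBot {l : Filter ℕ} (hl : ∀ A ∈ l, IsJSet A) : (jFilter ⊓ l).NeBot := by
  refine inf_neBot_iff.2 fun U hU V hV => ?_
  by_contra hUV
  refine (show ¬ IsJSet Uᶜ from hU) ((hl V hV).mono ?_)
  exact (Set.disjoint_iff_inter_eq_empty.2 (Set.not_nonempty_iff_eq_empty.1 hUV)).subset_compl_left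

theorem MemJ.uAdd {p q : Ultrafilter ℕ} (hq : MemJ q) : MemJ (uAdd p q) := by
  intro A hA F hF
  obtain ⟨x, hx⟩ := (eventually_uAdd.1 hA).exists
  obtain ⟨a, β, hβ, h⟩ := hq _ hx F hF
  exact ⟨x + a, β, hβ, fun f hf => by rw [add_assoc]; exact h f hf⟩

theorem isClosed_setOf_ultrafilter_le {X : Type*} (l : Filter X) :
    IsClosed {p : Ultrafilter X | ↑p ≤ l} := by
  have : {p : Ultrafilter X | ↑p ≤ l} = ⋂ s ∈ l, {p | s ∈ p} := by
    ext p
    simp only [Set.mem_iInter]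
    rfl
  rw [this]
  exact isClosed_biInter fun s _ => ultrafilter_isClosed_basic s

theorem exists_idempotentUF_memJ {ι : Type*} [Nonempty ι] {T : ι → Set ℕ}
    (hT : Directed (· ⊇ ·) T) (hJ : ∀ i, IsJSet (T i))
    (hadd : ∀ i, ∀ x ∈ T i, ∃ j, ∀ y ∈ T j, x + y ∈ T i) :
    ∃ p : Ultrafilter ℕ, IdempotentUF p ∧ MemJ p ∧ ∀ i, T i ∈ p := by
  let l : Filter ℕ := jFilter ⊓ ⨅ i, 𝓟 (T i)
  have hl (p : Ultrafilter ℕ) : ↑p ≤ l ↔ MemJ p ∧ ∀ i, T i ∈ p := by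
    simp only [l, le_inf_iff, le_iInf_iff, le_principal_iff, memJ_iff_le_jFilter]
    rfl
  have : l.NeBot := jFilter_inf_neBot fun A hA => by
    have hdir : Directed (· ≥ ·) fun i => 𝓟 (T i) := fun i j =>
      (hT i j).imp fun _ => And.imp principal_mono.2 principal_mono.2
    obtain ⟨i, hi⟩ := (mem_iInf_of_directed hdir A).1 hA
    exact (hJ i).mono hi
  let := Ultrafilter.addSemigroup (M := ℕ)
  obtain ⟨p, hp, hidem⟩ := exists_idempotent_in_compact_add_subsemigroup
    (M := Ultrafilter ℕ) Ultrafilter.continuous_add_left {p | ↑p ≤ l} ⟨.of l, Ultrafilter.of_le l⟩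
    (isClosed_setOf_ultrafilter_le l).isCompact fun p hp q hq => by
      obtain ⟨-, hpT⟩ := (hl p).1 hp
      obtain ⟨hqJ, hqT⟩ := (hl q).1 hq
      refine (hl (uAdd p q)).2 ⟨hqJ.uAdd, fun i => eventually_uAdd.2 ?_⟩
      filter_upwards [hpT i] with x hx
      obtain ⟨j, hj⟩ := hadd i x hx
      exact mem_of_superset (hqT j) hj
  exact ⟨p, hidem, (hl p).1 hp⟩

/-! ### Sums along chains -/

/-- `ChainSum X F K x` says that `x = x₁ + ⋯ + xₙ` with `n ≥ 1` for some chain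
`F < G₁ < ⋯ < Gₙ = K` and some `xᵢ ∈ X Gᵢ`. The end `K` is recorded so that chain sums can be
concatenated. -/
inductive ChainSum {P M : Type*} [Preorder P] [Add M] (X : P → Set M) : P → P → M → Prop
  | single {F G x} : F < G → x ∈ X G → ChainSum X F G x
  | cons {F G K x y} : F < G → x ∈ X G → ChainSum X G K y → ChainSum X F K (x + y)

namespace ChainSum

variable {P M : Type*} [Preorder P] {X : P → Set M} {F G K : P}

theorem trans [AddSemigroup M] {x y : M} (hx : ChainSum X F G x) (hy : ChainSum X G K y) :
    ChainSum X F K (x + y) := by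
  induction hx with
  | single hFG hx => exact .cons hFG hx hy
  | cons hFG hx _ ih => rw [add_assoc]; exact .cons hFG hx (ih hy)

theorem mono_left [Add M] {x : M} (hFG : F ≤ G) (hx : ChainSum X G K x) : ChainSum X F K x := by
  cases hx with
  | single hGK hx => exact .single (hFG.trans_lt hGK) hx
  | cons hGL hx hy => exact .cons (hFG.trans_lt hGL) hx hy

theorem mul_add_mem {R : Type*} [NonUnitalNonAssocSemiring R] {X S T : P → Set R} {b y x : R}
    (hS : ∀ {F G y x}, F < G → y ∈ X G → x ∈ S G → b * y + x ∈ T F)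
    (hT : ∀ {F G y x}, F < G → y ∈ X G → x ∈ T G → b * y + x ∈ T F)
    (hy : ChainSum X F K y) (hx : x ∈ S K) : b * y + x ∈ T F := by
  induction hy with
  | single hFG hy => exact hS hFG hy hx
  | cons hFG hy _ ih =>
    rw [mul_add, add_assoc]
    exact hT hFG hy (ih hx)

theorem sum_of_strictMono [AddCommMonoid M] {G : ℕ → P} (hG : StrictMono G) {x : ℕ → M}
    (hx : ∀ i, x i ∈ X (G i)) {β : Finset ℕ} {n : ℕ} (hn : IsGreatest (β : Set ℕ) n)
    (hF : ∀ i ∈ β, F < G i) : ChainSum X F (G n) (∑ i ∈ β, x i) := by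
  induction β using Finset.induction_on_min generalizing F with
  | empty => simpa using hn.1
  | insert i β hi ih =>
    rw [Finset.sum_insert fun h => (hi i h).false]
    have hFi : F < G i := hF i (Finset.mem_insert_self i β)
    rcases β.eq_empty_or_nonempty with rfl | ⟨j, hj⟩
    · obtain rfl : n = i := by simpa using hn.1
      simpa using single hFi (hx n)
    · have hin : i < n := (hi j hj).trans_le (hn.2 (by simp [hj]))
      have hnβ : IsGreatest (β : Set ℕ) n :=
        ⟨by simpa [hin.ne'] using hn.1, fun k hk => hn.2 (by simp [Finset.mem_coe.1 hk])⟩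
      exact cons hFi (hx i) (ih hnβ fun k hk => hG (hi k hk))

end ChainSum

instance noMaxOrder_finset {X : Type*} [Infinite X] : NoMaxOrder (Finset X) where
  exists_gt F :=
    let ⟨x, hx⟩ := Infinite.exists_notMem_finset F
    ⟨F.cons x hx, Finset.ssubset_cons hx⟩

/-- The summands `α(G) + ∑_{t ∈ H(G)} f(t)`, `f ∈ G`, that the theorem attaches to `G`. -/
def summands (α : Finset (ℕ → ℕ) → ℕ) (H : Finset (ℕ → ℕ) → Finset ℕ) (G : Finset (ℕ → ℕ)) :
    Set ℕ :=
  {x | ∃ f ∈ G, α G + ∑ t ∈ H G, f t = x}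

theorem exists_idempotentUF_memJ_chainSum (α : Finset (ℕ → ℕ) → ℕ)
    {H : Finset (ℕ → ℕ) → Finset ℕ} (hH : ∀ F, F.Nonempty → (H F).Nonempty) :
    ∃ p : Ultrafilter ℕ, IdempotentUF p ∧ MemJ p ∧
      ∀ F, ∀ᶠ x in p, ∃ K, ChainSum (summands α H) F K x := by
  classical
  refine exists_idempotentUF_memJ (T := fun F => {x | ∃ K, ChainSum (summands α H) F K x})
    (fun F G => ⟨F ∪ G, ?_, ?_⟩) (fun F F' _ => ?_) ?_
  · exact fun x ⟨K, hK⟩ => ⟨K, hK.mono_left Finset.subset_union_left⟩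
  · exact fun x ⟨K, hK⟩ => ⟨K, hK.mono_left Finset.subset_union_right⟩
  · obtain ⟨G, hG⟩ := exists_gt (F ∪ F')
    have hne : G.Nonempty := Finset.empty_ssubset.1 (bot_le.trans_lt hG)
    refine ⟨α G, H G, hH G hne, fun f hf => ⟨G, .single ?_ ⟨f, ?_, rfl⟩⟩⟩
    · exact Finset.subset_union_left.trans_lt hG
    · exact hG.le (Finset.mem_union_right F hf)
  · exact fun F x ⟨G, hG⟩ => ⟨G, fun y ⟨K, hK⟩ => ⟨K, hG.trans hK⟩⟩

/-! ### Tails of linear combinations -/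

section Tails

variable {m : ℕ}

/-- The tail `a_k·p_k + ⋯ + a_{m-1}·p_{m-1}` of `linComb m a p` (indices from `0`). -/
def linCombTail (a : Fin m → ℕ) (p : Fin m → Ultrafilter ℕ) : Fin (m + 1) → Ultrafilter ℕ :=
  Fin.reverseInduction (pure 0) fun k q => uAdd ((p k).map (a k * ·)) q

@[simp]
theorem linCombTail_last (a : Fin m → ℕ) (p : Fin m → Ultrafilter ℕ) :
    linCombTail a p (Fin.last m) = pure 0 :=
  Fin.reverseInduction_last ..

theorem linCombTail_castSucc (a : Fin m → ℕ) (p : Fin m → Ultrafilter ℕ) (k : Fin m) :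
    linCombTail a p k.castSucc = uAdd ((p k).map (a k * ·)) (linCombTail a p k.succ) :=
  Fin.reverseInduction_castSucc ..

theorem linCombTail_succ (a : Fin (m + 1) → ℕ) (p : Fin (m + 1) → Ultrafilter ℕ)
    (k : Fin (m + 1)) :
    linCombTail a p k.succ = linCombTail (fun l => a l.succ) (fun l => p l.succ) k := by
  induction k using Fin.reverseInduction with
  | last => rw [Fin.succ_last, linCombTail_last, linCombTail_last]
  | cast k ih => rw [← Fin.castSucc_succ, linCombTail_castSucc, ih, linCombTail_castSucc]

theorem linCombTail_zero (a : Fin m → ℕ) (p : Fin m → Ultrafilter ℕ) :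
    linCombTail a p 0 = linComb m a p := by
  induction m with
  | zero => exact linCombTail_last a p
  | succ m ih => rw [← Fin.castSucc_zero, linCombTail_castSucc, linCombTail_succ, ih]; rfl

theorem uAdd_linCombTail_castSucc {a : Fin m → ℕ} {p : Fin m → Ultrafilter ℕ} {k : Fin m}
    (hp : IdempotentUF (p k)) :
    uAdd ((p k).map (a k * ·)) (linCombTail a p k.castSucc) = linCombTail a p k.castSucc := by
  rw [linCombTail_castSucc, ← uAdd_assoc, hp.map_mul]

/-! ### From chains to ultrafilters -/

/-- `IsTailCombination a α H k F x` says that `x` is the part `l ≥ k` of a linear combination as in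
the theorem, formed along a chain above `F`. -/
def IsTailCombination (a : Fin m → ℕ) (α : Fin m → Finset (ℕ → ℕ) → ℕ)
    (H : Fin m → Finset (ℕ → ℕ) → Finset ℕ) (k : Fin (m + 1)) (F : Finset (ℕ → ℕ)) (x : ℕ) :
    Prop :=
  ∃ (G : ℕ → Finset (ℕ → ℕ)) (f : ℕ → ℕ → ℕ) (β : Fin m → Finset ℕ),
    StrictMono G ∧ F < G 0 ∧ (∀ i, f i ∈ G i) ∧ (∀ l, (β l).Nonempty ↔ k ≤ l.castSucc) ∧
    (∀ l l', l < l' → ∀ i ∈ β l, ∀ j ∈ β l', i < j) ∧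
    ∑ l, a l * ∑ i ∈ β l, (α l (G i) + ∑ t ∈ H l (G i), f i t) = x

variable {a : Fin m → ℕ} {α : Fin m → Finset (ℕ → ℕ) → ℕ} {H : Fin m → Finset (ℕ → ℕ) → Finset ℕ}
  {F G : Finset (ℕ → ℕ)} {k : Fin m} {x y : ℕ}

theorem isTailCombination_last (F : Finset (ℕ → ℕ)) :
    IsTailCombination a α H (Fin.last m) F 0 := by
  obtain ⟨G, hG, rfl⟩ := Nat.exists_strictMono' F
  have hne (i : ℕ) : (G (i + 1)).Nonempty :=
    Finset.empty_ssubset.1 (bot_le.trans_lt (hG i.lt_succ_self))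
  choose f hf using hne
  exact ⟨fun i => G (i + 1), f, fun _ => ∅, fun i j h => hG (Nat.succ_lt_succ h),
    hG Nat.zero_lt_one, hf, by simp [Fin.le_iff_val_le_val], by simp, by simp⟩

/-- The blocks of indices obtained from `β` by putting a new index `0` in front of all indices and
into block `k`. -/
def prependBlock (k : Fin m) (β : Fin m → Finset ℕ) (l : Fin m) : Finset ℕ :=
  (if l = k then {0} else ∅) ∪ (β l).map (addRightEmbedding 1)

theorem mem_prependBlock {β : Fin m → Finset ℕ} {l : Fin m} {i : ℕ} :
    i ∈ prependBlock k β l ↔ (l = k ∧ i = 0) ∨ ∃ i' ∈ β l, i' + 1 = i := by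
  by_cases hl : l = k <;> simp [prependBlock, hl]

theorem nonempty_prependBlock {β : Fin m → Finset ℕ} {l : Fin m} :
    (prependBlock k β l).Nonempty ↔ l = k ∨ (β l).Nonempty := by
  by_cases hl : l = k <;> simp [prependBlock, hl]

theorem sum_prependBlock (β : Fin m → Finset ℕ) (l : Fin m) (X : ℕ → ℕ) :
    ∑ i ∈ prependBlock k β l, X i = (if l = k then X 0 else 0) + ∑ i ∈ β l, X (i + 1) := by
  rw [prependBlock, Finset.sum_union (by split_ifs <;> simp), Finset.sum_map]
  split_ifs <;> simp

theorem prependBlock_lt {β : Fin m → Finset ℕ} (hβ : ∀ l < k, β l = ∅)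
    (hord : ∀ l l', l < l' → ∀ i ∈ β l, ∀ j ∈ β l', i < j) (l l' : Fin m) (hl : l < l') :
    ∀ i ∈ prependBlock k β l, ∀ j ∈ prependBlock k β l', i < j := by
  intro i hi j hj
  rcases mem_prependBlock.1 hi with ⟨rfl, rfl⟩ | ⟨i', hi', rfl⟩ <;>
    rcases mem_prependBlock.1 hj with ⟨rfl, rfl⟩ | ⟨j', hj', rfl⟩
  · exact absurd hl (lt_irrefl _)
  · exact j'.succ_pos
  · simp [hβ l hl] at hi'
  · exact Nat.succ_lt_succ (hord l l' hl i' hi' j' hj')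

-- `G` may begin block `k` (`j = k.succ`) or extend it (`j = k.castSucc`).
theorem IsTailCombination.cons {j : Fin (m + 1)} (hj : j = k.succ ∨ j = k.castSucc) (hFG : F < G)
    (hy : y ∈ summands (α k) (H k) G) (hx : IsTailCombination a α H j G x) :
    IsTailCombination a α H k.castSucc F (a k * y + x) := by
  obtain ⟨g, hg, rfl⟩ := hy
  obtain ⟨G', f, β, hG', hGG', hf, hne, hord, rfl⟩ := hx
  have hjl {l : Fin m} (hl : l ≠ k) : j ≤ l.castSucc ↔ k < l := by
    rcases hj with rfl | rfl
    · exact Fin.succ_le_castSucc_iff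
    · exact Fin.castSucc_le_castSucc_iff.trans hl.symm.le_iff_lt
  refine ⟨fun | 0 => G | i + 1 => G' i, fun | 0 => g | i + 1 => f i, prependBlock k β,
    strictMono_nat_of_lt_succ ?_, hFG, ?_, fun l => ?_, prependBlock_lt (fun l hl => ?_) hord, ?_⟩
  · rintro (_ | i)
    exacts [hGG', hG' i.lt_succ_self]
  · rintro (_ | i)
    exacts [hg, hf i]
  · rw [nonempty_prependBlock, hne, Fin.castSucc_le_castSucc_iff, le_iff_eq_or_lt (b := l),
      eq_comm (a := k)]
    exact or_congr_right' hjl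
  · exact Finset.not_nonempty_iff_eq_empty.1 fun h => hl.asymm ((hjl hl.ne).1 ((hne l).1 h))
  · simp only [sum_prependBlock, mul_add (a _), mul_ite, mul_zero,
      Finset.sum_add_distrib (s := .univ), Finset.sum_ite_eq', Finset.mem_univ, if_true]

theorem eventually_isTailCombination {p : Fin m → Ultrafilter ℕ}
    (hp : ∀ l F, ∀ᶠ x in p l, ∃ K, ChainSum (summands (α l) (H l)) F K x) (k : Fin (m + 1))
    (F : Finset (ℕ → ℕ)) : ∀ᶠ x in linCombTail a p k, IsTailCombination a α H k F x := by
  induction k using Fin.reverseInduction generalizing F with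
  | last => rw [linCombTail_last]; exact isTailCombination_last F
  | cast k ih =>
    rw [linCombTail_castSucc, eventually_uAdd]
    refine Ultrafilter.mem_map.2 ?_
    filter_upwards [hp k F] with y ⟨K, hy⟩
    filter_upwards [ih K] with x hx
    exact hy.mul_add_mem (S := fun G => {x | IsTailCombination a α H k.succ G x})
      (T := fun G => {x | IsTailCombination a α H k.castSucc G x})
      (fun hFG hy hx => hx.cons (.inl rfl) hFG hy) (fun hFG hy hx => hx.cons (.inr rfl) hFG hy) hx

/-- Condition (b) of the theorem: all linear combinations formed along increasing chains of
finite sets of functions lie in `A`. -/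
def ChainCombinationsIn (a : Fin m → ℕ) (α : Fin m → Finset (ℕ → ℕ) → ℕ)
    (H : Fin m → Finset (ℕ → ℕ) → Finset ℕ) (A : Set ℕ) : Prop :=
  ∀ G : ℕ → Finset (ℕ → ℕ), (∀ i, (G i).Nonempty) → (∀ i j, i < j → G i ⊂ G j) →
    ∀ f : ℕ → ℕ → ℕ, (∀ i, f i ∈ G i) →
    ∀ β : Fin m → Finset ℕ, (∀ l, (β l).Nonempty) →
      (∀ l l' : Fin m, l < l' → ∀ x ∈ β l, ∀ y ∈ β l', x < y) →
      ∑ l, a l * (∑ i ∈ β l, (α l (G i) + ∑ t ∈ H l (G i), f i t)) ∈ A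

theorem ChainCombinationsIn.mem_linComb {A : Set ℕ} (hA : ChainCombinationsIn a α H A)
    {p : Fin m → Ultrafilter ℕ}
    (hp : ∀ l F, ∀ᶠ x in p l, ∃ K, ChainSum (summands (α l) (H l)) F K x) :
    A ∈ linComb m a p := by
  rw [← linCombTail_zero]
  refine mem_of_superset (eventually_isTailCombination hp 0 ∅) ?_
  rintro _ ⟨G, f, β, hG, -, hf, hβ, hord, rfl⟩
  exact hA G (fun i => ⟨f i, hf i⟩) (fun i j h => hG h) f hf β
    (fun l => (hβ l).2 l.castSucc.zero_le) hord

end Tails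

/-! ### From ultrafilters to chains -/

theorem exists_forall_lt_of_finite_Iio {I X : Type*} [Preorder I] [WellFoundedLT I]
    (hI : ∀ i : I, (Set.Iio i).Finite) {P : X → Prop} {r : I → X → X → Prop}
    (h : ∀ i (s : Set X), s.Finite → (∀ x ∈ s, P x) → ∃ y, P y ∧ ∀ x ∈ s, r i x y) :
    ∃ f : I → X, (∀ i, P (f i)) ∧ ∀ i j, i < j → r j (f i) (f j) := by
  have step (i : I) (u : ∀ j, j < i → {x // P x}) : ∃ y : {x // P x}, ∀ j hj, r i (u j hj) y := by
    have := (hI i).to_subtype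
    obtain ⟨y, hy, hr⟩ := h i (Set.range fun j : Set.Iio i => (u j j.2).1) (Set.finite_range _)
      (by rintro _ ⟨j, rfl⟩; exact (u j j.2).2)
    exact ⟨⟨y, hy⟩, fun j hj => hr _ ⟨⟨j, hj⟩, rfl⟩⟩
  choose g hg using step
  let f : I → {x // P x} := WellFoundedLT.fix g
  refine ⟨fun i => f i, fun i => (f i).2, fun i j hij => ?_⟩
  have hf : f j = g j fun i _ => f i := WellFoundedLT.fix_eq g j
  simp only [hf]
  exact hg j (fun i _ => f i) i hij

section Residues

variable {m : ℕ} {a : Fin m → ℕ}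

theorem sum_mem_of_forall_add_mem {M : Type*} [AddCommMonoid M] {S : Fin (m + 1) → Set M}
    {y : Fin m → M} (hlast : 0 ∈ S (Fin.last m))
    (hadd : ∀ k, ∀ x ∈ S k.succ, y k + x ∈ S k.castSucc) : ∑ k, y k ∈ S 0 := by
  induction m with
  | zero => simpa using hlast
  | succ m ih =>
    rw [Fin.sum_univ_succ]
    exact hadd 0 _ (ih (S := fun k => S k.succ) hlast fun k => hadd k.succ)

theorem chainCombinationsIn_of_mul_add_mem {α : Fin m → Finset (ℕ → ℕ) → ℕ}
    {H : Fin m → Finset (ℕ → ℕ) → Finset ℕ} {A : Set ℕ}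
    {R : Finset (ℕ → ℕ) → Fin (m + 1) → Set ℕ} (hA : R ∅ 0 ⊆ A) (hlast : ∀ F, 0 ∈ R F (Fin.last m))
    (hadd : ∀ k {F K y}, ChainSum (summands (α k) (H k)) F K y →
      ∀ x ∈ R K k.succ, a k * y + x ∈ R F k.castSucc) :
    ChainCombinationsIn a α H A := by
  intro G hGne hG f hf β hβ hord
  let K : Fin (m + 1) → Finset (ℕ → ℕ) := Fin.cons ∅ fun l => G ((β l).max' (hβ l))
  have hK (l : Fin m) : ∀ i ∈ β l, K l.castSucc < G i := by
    cases m with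
    | zero => exact l.elim0
    | succ m =>
      intro i hi
      cases l using Fin.cases with
      | zero => exact Finset.empty_ssubset.2 (hGne i)
      | succ l => exact hG _ _ (hord _ _ l.castSucc_lt_succ _ (Finset.max'_mem _ _) i hi)
  have hmono : StrictMono G := fun i j h => hG i j h
  have hmem (l : Fin m) (i : ℕ) :
      α l (G i) + ∑ t ∈ H l (G i), f i t ∈ summands (α l) (H l) (G i) := ⟨f i, hf i, rfl⟩
  have hsum (l : Fin m) : ChainSum (summands (α l) (H l)) (K l.castSucc) (K l.succ)
      (∑ i ∈ β l, (α l (G i) + ∑ t ∈ H l (G i), f i t)) :=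
    .sum_of_strictMono hmono (hmem l) ((β l).isGreatest_max' (hβ l)) (hK l)
  exact hA (sum_mem_of_forall_add_mem (S := fun k => R (K k) k) (hlast _) fun l =>
    hadd l (hsum l))

theorem eventually_mem_linCombTail {p : Fin m → Ultrafilter ℕ} {k : Fin m}
    (hp : IdempotentUF (p k)) {C : Set ℕ} (hC : C ∈ linCombTail a p k.castSucc) :
    ∀ᶠ y in p k, ∀ j, j = k.succ ∨ j = k.castSucc → ∀ᶠ x in linCombTail a p j, a k * y + x ∈ C := by
  have hsucc : ∀ᶠ y in p k, ∀ᶠ x in linCombTail a p k.succ, a k * y + x ∈ C := by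
    rwa [linCombTail_castSucc] at hC
  have hcast : ∀ᶠ y in p k, ∀ᶠ x in linCombTail a p k.castSucc, a k * y + x ∈ C := by
    rwa [← uAdd_linCombTail_castSucc hp] at hC
  filter_upwards [hsucc, hcast] with y hs hc
  rintro j (rfl | rfl)
  exacts [hs, hc]

variable {ι : Type*} {c : Fin m → ι} {p : ι → Ultrafilter ℕ}

theorem exists_offset_support (hidem : ∀ i, IdempotentUF (p i)) (hJ : ∀ i, MemJ (p i))
    {C : Fin (m + 1) → Set ℕ} (hC : ∀ k, C k ∈ linCombTail a (p ∘ c) k) (F : Finset (ℕ → ℕ))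
    (N : ι → ℕ) :
    ∃ (α : ι → ℕ) (H : ι → Finset ℕ), (∀ i, (H i).Nonempty) ∧ (∀ i, ∀ t ∈ H i, N i ≤ t) ∧
      ∀ k, ∀ f ∈ F, ∀ j, j = k.succ ∨ j = k.castSucc → ∀ᶠ x in linCombTail a (p ∘ c) j,
        a k * (α (c k) + ∑ t ∈ H (c k), f t) + x ∈ C k.castSucc := by
  have hgood (i : ι) : ∀ᶠ y in p i, ∀ k, c k = i → ∀ j, j = k.succ ∨ j = k.castSucc →
      ∀ᶠ x in linCombTail a (p ∘ c) j, a k * y + x ∈ C k.castSucc := by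
    refine eventually_all.2 fun k => eventually_imp_distrib_left.2 ?_
    rintro rfl
    exact eventually_mem_linCombTail (p := p ∘ c) (hidem (c k)) (hC k.castSucc)
  choose α H hH hN hF using fun i => (hJ i _ (hgood i)).exists_above F (N i)
  exact ⟨α, H, hH, hN, fun k f hf => hF (c k) f hf k rfl⟩

/-- The data that the recursion attaches to a finite set `F` of functions: the values `α_i(F)` and
`H_i(F)`, and for each `k` a set of remainders `x` that may still follow once the blocks `l < k`
of a linear combination have been completed along a chain ending in `F`. -/
structure Stage (ι : Type*) (m : ℕ) where
  offset : ι → ℕ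
  support : ι → Finset ℕ
  residue : Fin (m + 1) → Set ℕ

namespace Stage

/-- Validity of a stage for the ultrafilters `p`, for combinations in which block `l` uses
the ultrafilter `p (c l)`. -/
structure Valid (a : Fin m → ℕ) (c : Fin m → ι) (p : ι → Ultrafilter ℕ) (A : Set ℕ)
    (d : Stage ι m) : Prop where
  support_nonempty : ∀ i, (d.support i).Nonempty
  residue_mem : ∀ k, d.residue k ∈ linCombTail a (p ∘ c) k
  residue_zero_subset : d.residue 0 ⊆ A

/-- Compatibility of a stage `d` with a stage `d'` that is attached to a larger set `F`. A summand
from `d'` may begin block `k` (`j = k.succ`) or extend it (`j = k.castSucc`). -/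
structure Precedes (a : Fin m → ℕ) (c : Fin m → ι) (F : Finset (ℕ → ℕ)) (d d' : Stage ι m) :
    Prop where
  support_lt : ∀ i, ∀ s ∈ d.support i, ∀ t ∈ d'.support i, s < t
  add_mem_residue : ∀ k, ∀ f ∈ F, ∀ j, j = k.succ ∨ j = k.castSucc → ∀ x ∈ d'.residue j,
    a k * (d'.offset (c k) + ∑ t ∈ d'.support (c k), f t) + x ∈ d.residue k.castSucc

variable {A : Set ℕ}

theorem exists_next (hidem : ∀ i, IdempotentUF (p i)) (hJ : ∀ i, MemJ (p i))
    (hA : A ∈ linComb m a (p ∘ c)) (F : Finset (ℕ → ℕ)) (s : Set (Stage ι m)) (hs : s.Finite)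
    (hvalid : ∀ d ∈ s, d.Valid a c p A) :
    ∃ d', d'.Valid a c p A ∧ ∀ d ∈ s, d.Precedes a c F d' := by
  have hC (k : Fin (m + 1)) : ⋂ d ∈ s, d.residue k ∈ linCombTail a (p ∘ c) k :=
    (biInter_mem hs).2 fun d hd => (hvalid d hd).residue_mem k
  have hbdd (i : ι) : BddAbove (⋃ d ∈ s, (d.support i : Set ℕ)) :=
    (hs.biUnion fun d _ => (d.support i).finite_toSet).bddAbove
  choose N hN using hbdd
  obtain ⟨α, H, hH, hlt, hadd⟩ := exists_offset_support hidem hJ hC F fun i => N i + 1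
  let residue (j : Fin (m + 1)) : Set ℕ := {x | (j = 0 → x ∈ A) ∧ ∀ k, ∀ f ∈ F,
    j = k.succ ∨ j = k.castSucc →
      a k * (α (c k) + ∑ t ∈ H (c k), f t) + x ∈ ⋂ d ∈ s, d.residue k.castSucc}
  refine ⟨⟨α, H, residue⟩, ⟨hH, fun j => ?_, fun x hx => hx.1 rfl⟩, fun d hd => ⟨?_, ?_⟩⟩
  · refine Eventually.and (eventually_imp_distrib_left.2 ?_) (eventually_all.2 fun k =>
      (eventually_all_finset F).2 fun f hf => eventually_imp_distrib_left.2 (hadd k f hf j))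
    rintro rfl
    rwa [linCombTail_zero]
  · intro i u hu t ht
    exact Nat.lt_of_lt_of_le (Nat.lt_succ_of_le (hN i (Set.mem_biUnion hd hu))) (hlt i t ht)
  · intro k f hf j hj x hx
    exact Set.mem_iInter₂.1 (hx.2 k f hf hj) d hd

theorem chainCombinationsIn {D : Finset (ℕ → ℕ) → Stage ι m} (hvalid : ∀ F, (D F).Valid a c p A)
    (hD : ∀ F G, F < G → (D F).Precedes a c G (D G)) :
    ChainCombinationsIn a (fun l F => (D F).offset (c l)) (fun l F => (D F).support (c l)) A := by
  refine chainCombinationsIn_of_mul_add_mem (R := fun F => (D F).residue)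
    (hvalid ∅).residue_zero_subset (fun F => ?_) fun k F K y hy x hx => ?_
  · simpa using (hvalid F).residue_mem (Fin.last m)
  · have step {F G y x} (j : Fin (m + 1)) (hj : j = k.succ ∨ j = k.castSucc) (hFG : F < G)
        (hy : y ∈ summands (fun F => (D F).offset (c k)) (fun F => (D F).support (c k)) G)
        (hx : x ∈ (D G).residue j) : a k * y + x ∈ (D F).residue k.castSucc := by
      obtain ⟨f, hf, rfl⟩ := hy
      exact (hD F G hFG).add_mem_residue k f hf j hj x hx
    exact hy.mul_add_mem (T := fun F => (D F).residue k.castSucc) (step _ (.inl rfl))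
      (step _ (.inr rfl)) hx

end Stage

end Residues

theorem linear_comb_characterization_general {ι : Type*} {m : ℕ} (a : Fin m → ℕ) (c : Fin m → ι)
    (A : Set ℕ) :
    (∃ (α : ι → Finset (ℕ → ℕ) → ℕ) (H : ι → Finset (ℕ → ℕ) → Finset ℕ),
      (∀ i F, F.Nonempty → (H i F).Nonempty) ∧
      (∀ i F G, F.Nonempty → F ⊂ G → ∀ x ∈ H i F, ∀ y ∈ H i G, x < y) ∧
      ChainCombinationsIn a (α ∘ c) (H ∘ c) A) ↔
    ∃ p : ι → Ultrafilter ℕ,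
      (∀ i, IdempotentUF (p i)) ∧ (∀ i, MemJ (p i)) ∧ A ∈ linComb m a (p ∘ c) := by
  constructor
  · rintro ⟨α, H, hH, -, hA⟩
    choose p hidem hJ hp using fun i => exists_idempotentUF_memJ_chainSum (α i) (hH i)
    exact ⟨p, hidem, hJ, hA.mem_linComb fun l => hp (c l)⟩
  · rintro ⟨p, hidem, hJ, hA⟩
    have hfin (F : Finset (ℕ → ℕ)) : (Set.Iio F).Finite :=
      F.powerset.finite_toSet.subset fun G hG => Finset.mem_powerset.2 hG.le
    obtain ⟨D, hvalid, hD⟩ :=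
      exists_forall_lt_of_finite_Iio hfin (Stage.exists_next hidem hJ hA)
    exact ⟨fun i F => (D F).offset i, fun i F => (D F).support i,
      fun i F _ => (hvalid F).support_nonempty i, fun i F G _ hFG => (hD F G hFG).support_lt i,
      Stage.chainCombinationsIn hvalid hD⟩

/-- Characterization of the sets witnessing the linear-combination stronger central sets
theorem via (sums of multiples of) idempotents of 𝒥. -/
theorem linear_comb_characterization (m : ℕ) (hm : 1 ≤ m) (a : Fin m → ℕ) (A : Set ℕ) :
    ((∃ (α : Finset (ℕ → ℕ) → ℕ) (H : Finset (ℕ → ℕ) → Finset ℕ),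
      (∀ F : Finset (ℕ → ℕ), F.Nonempty → (H F).Nonempty) ∧
      (∀ F G : Finset (ℕ → ℕ), F.Nonempty → F ⊂ G →
        ∀ x ∈ H F, ∀ y ∈ H G, x < y) ∧
      (∀ G : ℕ → Finset (ℕ → ℕ),
        (∀ i, (G i).Nonempty) → (∀ i j, i < j → G i ⊂ G j) →
        ∀ f : ℕ → ℕ → ℕ, (∀ i, f i ∈ G i) →
        ∀ β : Fin m → Finset ℕ,
          (∀ l, (β l).Nonempty) →
          (∀ l l' : Fin m, l < l' → ∀ x ∈ β l, ∀ y ∈ β l', x < y) →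
          ∑ l : Fin m, a l * (∑ i ∈ β l, (α (G i) + ∑ t ∈ H (G i), f i t)) ∈ A))
      ↔
      (∃ p : Ultrafilter ℕ, IdempotentUF p ∧ MemJ p ∧ A ∈ linComb m a fun _ => p)) ∧
    ((∃ (α : Fin m → Finset (ℕ → ℕ) → ℕ) (H : Fin m → Finset (ℕ → ℕ) → Finset ℕ),
      (∀ (l : Fin m) (F : Finset (ℕ → ℕ)), F.Nonempty → (H l F).Nonempty) ∧
      (∀ (l : Fin m) (F G : Finset (ℕ → ℕ)), F.Nonempty → F ⊂ G →
        ∀ x ∈ H l F, ∀ y ∈ H l G, x < y) ∧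
      (∀ G : ℕ → Finset (ℕ → ℕ),
        (∀ i, (G i).Nonempty) → (∀ i j, i < j → G i ⊂ G j) →
        ∀ f : ℕ → ℕ → ℕ, (∀ i, f i ∈ G i) →
        ∀ β : Fin m → Finset ℕ,
          (∀ l, (β l).Nonempty) →
          (∀ l l' : Fin m, l < l' → ∀ x ∈ β l, ∀ y ∈ β l', x < y) →
          ∑ l : Fin m, a l * (∑ i ∈ β l, (α l (G i) + ∑ t ∈ H l (G i), f i t)) ∈ A))
      ↔
      (∃ p : Fin m → Ultrafilter ℕ,
        (∀ i, IdempotentUF (p i)) ∧ (∀ i, MemJ (p i)) ∧ A ∈ linComb m a p)) := by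
  refine ⟨?_, linear_comb_characterization_general a id A⟩
  simpa [(Equiv.funUnique Unit _).exists_congr_left, ChainCombinationsIn, Function.comp_def] using
    linear_comb_characterization_general a (fun _ => ()) A

end MultiCST
end
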